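/- arXiv:1111.0986 — 5 statements merged into one kernel-verified Lean document; each statement's English description precedes it below -/
import Mathlib

section
/- For every ℓ ≥ 2, the number of 321-avoiding alternating (up-down) permutations of length 2ℓ is the Catalan number C_{ℓ+1}. -/
/-- `w` is an alternating (up-down) permutation: `w 0 < w 1 > w 2 < ⋯`. -/
def UpDown {n : ℕ} (w : Equiv.Perm (Fin n)) : Prop :=
  ∀ i : ℕ, ∀ h : i + 1 < n,
    if i % 2 = 0 then w ⟨i, Nat.lt_of_succ_lt h⟩ < w ⟨i + 1, h⟩
    else w ⟨i + 1, h⟩ < w ⟨i, Nat.lt_of_succ_lt h⟩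

/-- `w` is a reverse-alternating (down-up) permutation: `w 0 > w 1 < w 2 > ⋯`. -/
def DownUp {n : ℕ} (w : Equiv.Perm (Fin n)) : Prop :=
  ∀ i : ℕ, ∀ h : i + 1 < n,
    if i % 2 = 0 then w ⟨i + 1, h⟩ < w ⟨i, Nat.lt_of_succ_lt h⟩
    else w ⟨i, Nat.lt_of_succ_lt h⟩ < w ⟨i + 1, h⟩

/-- The set of occurrences of the pattern 321 in `w`. -/
def occ321 {n : ℕ} (w : Equiv.Perm (Fin n)) : Set (Fin n × Fin n × Fin n) :=
  {t | t.1 < t.2.1 ∧ t.2.1 < t.2.2 ∧ w t.2.2 < w t.2.1 ∧ w t.2.1 < w t.1}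

/-- The set of occurrences of the pattern 123 in `w`. -/
def occ123 {n : ℕ} (w : Equiv.Perm (Fin n)) : Set (Fin n × Fin n × Fin n) :=
  {t | t.1 < t.2.1 ∧ t.2.1 < t.2.2 ∧ w t.1 < w t.2.1 ∧ w t.2.1 < w t.2.2}

open DyckStep in
theorem aux_count {n : ℕ} (c : Fin n → DyckStep) (a : DyckStep) (k : ℕ) :
    ((List.ofFn c).take k).count a = (Finset.univ.filter (fun v : Fin n => v.1 < k ∧ c v = a)).card := by
  induction k with
  | zero => simp
  | succ k ih =>
    by_cases hk : k < n
    · rw [List.take_add_one, List.count_append, ih]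
      have h2 : (List.ofFn c)[k]? = some (c ⟨k, hk⟩) := by
        simp [hk]
      rw [h2]
      have h3 : (Finset.univ.filter (fun v : Fin n => v.1 < k + 1 ∧ c v = a)) =
          (Finset.univ.filter (fun v : Fin n => v.1 < k ∧ c v = a)) ∪
          (Finset.univ.filter (fun v : Fin n => v = ⟨k, hk⟩ ∧ c ⟨k, hk⟩ = a)) := by
        ext v
        simp only [Finset.mem_filter, Finset.mem_univ, true_and, Finset.mem_union]
        constructor
        · rintro ⟨h, h'⟩
          by_cases hv : v.1 = k
          · right
            have : v = ⟨k, hk⟩ := Fin.ext hv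
            subst this
            exact ⟨rfl, h'⟩
          · left; exact ⟨by omega, h'⟩
        · rintro (⟨h, h'⟩ | ⟨h, h'⟩)
          · exact ⟨by omega, h'⟩
          · subst h; exact ⟨by simp, h'⟩
      rw [h3, Finset.card_union_of_disjoint]
      · congr 1
        by_cases h : c ⟨k, hk⟩ = a
        · simp [h, Finset.filter_eq']
        · simp [h]
      · rw [Finset.disjoint_left]
        intro v hv hv'
        simp only [Finset.mem_filter, Finset.mem_univ, true_and] at hv hv'
        have := hv.1
        rw [hv'.1] at this
        simp at this
    · have e1 : (List.ofFn c).take (k + 1) = (List.ofFn c).take k := by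
        rw [List.take_of_length_le, List.take_of_length_le] <;> simp <;> omega
      rw [e1, ih]
      congr 1
      ext v
      simp only [Finset.mem_filter, Finset.mem_univ, true_and]
      have := v.2
      constructor <;> rintro ⟨_, h⟩ <;> exact ⟨by omega, h⟩

theorem aux_mono {l : ℕ} (t : Fin l → ℕ) (ht : StrictMono t) (i : Fin l) (k : ℕ) :
    i.1 < (Finset.univ.filter (fun j => t j < k)).card ↔ t i < k := by
  constructor
  · intro h
    by_contra hc
    have : (Finset.univ.filter (fun j => t j < k)) ⊆ Finset.Iio i := by
      intro j hj
      simp only [Finset.mem_filter, Finset.mem_univ, true_and] at hj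
      simp only [Finset.mem_Iio]
      exact ht.lt_iff_lt.mp (by omega)
    have := Finset.card_le_card this
    rw [Fin.card_Iio] at this
    omega
  · intro h
    have : Finset.Iic i ⊆ (Finset.univ.filter (fun j => t j < k)) := by
      intro j hj
      simp only [Finset.mem_Iic] at hj
      simp only [Finset.mem_filter, Finset.mem_univ, true_and]
      exact lt_of_le_of_lt (ht.monotone hj) h
    have := Finset.card_le_card this
    rw [Fin.card_Iic] at this
    omega

/-- interleaving condition in terms of counts -/
theorem aux_inter {l : ℕ} (t s : Fin l → ℕ) (ht : StrictMono t) (hs : StrictMono s)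
    (hne : ∀ i j, t i ≠ s j) :
    (∀ i j : Fin l, j.1 = i.1 + 1 → t i < s j) ↔
    ∀ k, (Finset.univ.filter (fun j => s j < k)).card ≤ (Finset.univ.filter (fun j => t j < k)).card + 1 := by
  constructor
  · intro h k
    by_contra hc
    push Not at hc
    have hle : (Finset.univ.filter (fun j => s j < k)).card ≤ l := by
      simpa using Finset.card_filter_le (Finset.univ : Finset (Fin l)) (fun j => s j < k)
    set m := (Finset.univ.filter (fun j => t j < k)).card with hm
    have h1 := (aux_mono s hs ⟨m + 1, by omega⟩ k).mp hc
    have h2 := h ⟨m, by omega⟩ ⟨m + 1, by omega⟩ rfl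
    have h3 := (aux_mono t ht ⟨m, by omega⟩ k).mpr (by omega)
    simp only [← hm] at h3
    omega
  · intro h i j hij
    have h1 := (aux_mono s hs j (s j + 1)).mpr (by omega)
    have h2 := h (s j + 1)
    have h3 := (aux_mono t ht i (s j + 1)).mp (by omega)
    have := hne i j
    omega

/-- Pairs of interleaved chains. -/
def GG (l : ℕ) : Type :=
  {f : Fin l ⊕ Fin l ≃ Fin (2 * l) // StrictMono (fun i => f (Sum.inl i)) ∧
    StrictMono (fun i => f (Sum.inr i)) ∧ ∀ i j : Fin l, j.1 = i.1 + 1 → f (Sum.inl i) < f (Sum.inr j)}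

/-- The word of an interleaving. -/
def wordOf {l : ℕ} (f : Fin l ⊕ Fin l ≃ Fin (2 * l)) (v : Fin (2 * l)) : DyckStep :=
  Sum.elim (fun _ => DyckStep.U) (fun _ => DyckStep.D) (f.symm v)

theorem wordOf_U {l : ℕ} (f : Fin l ⊕ Fin l ≃ Fin (2 * l)) (v) :
    wordOf f v = DyckStep.U ↔ ∃ i, f (Sum.inl i) = v := by
  obtain ⟨x, rfl⟩ := f.surjective v
  cases x <;> simp [wordOf]

theorem wordOf_D {l : ℕ} (f : Fin l ⊕ Fin l ≃ Fin (2 * l)) (v) :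
    wordOf f v = DyckStep.D ↔ ∃ i, f (Sum.inr i) = v := by
  obtain ⟨x, rfl⟩ := f.surjective v
  cases x <;> simp [wordOf]

theorem wordOf_countU {l : ℕ} (f : Fin l ⊕ Fin l ≃ Fin (2 * l)) (k : ℕ) :
    ((List.ofFn (wordOf f)).take k).count DyckStep.U =
    (Finset.univ.filter (fun j : Fin l => (f (Sum.inl j)).1 < k)).card := by
  rw [aux_count]
  symm
  apply Finset.card_bij (fun j _ => f (Sum.inl j))
  · intro j hj
    simp only [Finset.mem_filter, Finset.mem_univ, true_and] at hj ⊢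
    exact ⟨hj, (wordOf_U f _).2 ⟨j, rfl⟩⟩
  · intro i _ j _ h
    simpa using h
  · intro v hv
    simp only [Finset.mem_filter, Finset.mem_univ, true_and] at hv
    obtain ⟨i, rfl⟩ := (wordOf_U f _).1 hv.2
    exact ⟨i, by simpa using hv.1, rfl⟩

theorem wordOf_countD {l : ℕ} (f : Fin l ⊕ Fin l ≃ Fin (2 * l)) (k : ℕ) :
    ((List.ofFn (wordOf f)).take k).count DyckStep.D =
    (Finset.univ.filter (fun j : Fin l => (f (Sum.inr j)).1 < k)).card := by
  rw [aux_count]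
  symm
  apply Finset.card_bij (fun j _ => f (Sum.inr j))
  · intro j hj
    simp only [Finset.mem_filter, Finset.mem_univ, true_and] at hj ⊢
    exact ⟨hj, (wordOf_D f _).2 ⟨j, rfl⟩⟩
  · intro i _ j _ h
    simpa using h
  · intro v hv
    simp only [Finset.mem_filter, Finset.mem_univ, true_and] at hv
    obtain ⟨i, rfl⟩ := (wordOf_D f _).1 hv.2
    exact ⟨i, by simpa using hv.1, rfl⟩

theorem wordOf_total {l : ℕ} (f : Fin l ⊕ Fin l ≃ Fin (2 * l)) :
    (List.ofFn (wordOf f)).count DyckStep.U = l ∧ (List.ofFn (wordOf f)).count DyckStep.D = l := by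
  have h : (List.ofFn (wordOf f)).take (2 * l) = List.ofFn (wordOf f) :=
    List.take_of_length_le (by simp)
  constructor
  · rw [← h, wordOf_countU]; simp
  · rw [← h, wordOf_countD]; simp

theorem wordOf_inter {l : ℕ} (f : Fin l ⊕ Fin l ≃ Fin (2 * l))
    (h1 : StrictMono (fun i => f (Sum.inl i))) (h2 : StrictMono (fun i => f (Sum.inr i))) :
    (∀ i j : Fin l, j.1 = i.1 + 1 → f (Sum.inl i) < f (Sum.inr j)) ↔
    ∀ k, ((List.ofFn (wordOf f)).take k).count DyckStep.D ≤
      ((List.ofFn (wordOf f)).take k).count DyckStep.U + 1 := by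
  simp only [wordOf_countU, wordOf_countD]
  have := aux_inter (fun i => (f (Sum.inl i)).1) (fun i => (f (Sum.inr i)).1)
    (fun i j h => h1 h) (fun i j h => h2 h) (fun i j h => by
      have := f.injective (Fin.ext h); simp at this)
  rw [← this]
  rfl

open DyckStep in
/-- The Dyck word of an interleaving. -/
def dyckOf {l : ℕ} (g : GG l) : {p : DyckWord // p.semilength = l + 1} :=
  ⟨{ toList := U :: (List.ofFn (wordOf g.1) ++ [D])
     count_U_eq_count_D := by
       have := wordOf_total g.1
       simp [this.1, this.2]
     count_D_le_count_U := by
       intro k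
       have ht := wordOf_total g.1
       have h := (wordOf_inter g.1 g.2.1 g.2.2.1).1 g.2.2.2
       rcases k with _ | k
       · simp
       · rw [List.take_succ_cons]
         by_cases hk : k ≤ 2 * l
         · rw [List.take_append_of_le_length (by simpa using hk)]
           simpa using h k
         · rw [List.take_of_length_le (by simp; omega)]
           simp [ht.1, ht.2] },
   by
     have := wordOf_total g.1
     simp [DyckWord.semilength, this.1]⟩

theorem dyckOf_inj {l : ℕ} : Function.Injective (dyckOf (l := l)) := by
  intro f g h
  have h' : DyckStep.U :: (List.ofFn (wordOf f.1) ++ [DyckStep.D]) =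
      DyckStep.U :: (List.ofFn (wordOf g.1) ++ [DyckStep.D]) :=
    congrArg (fun p => p.1.toList) h
  have hw : wordOf f.1 = wordOf g.1 := by simpa using h'
  have hU : (fun i => f.1 (Sum.inl i)) = (fun i => g.1 (Sum.inl i)) := by
    rw [← StrictMono.range_inj f.2.1 g.2.1]
    ext v
    simp only [Set.mem_range]
    rw [← wordOf_U, ← wordOf_U, hw]
  have hD : (fun i => f.1 (Sum.inr i)) = (fun i => g.1 (Sum.inr i)) := by
    rw [← StrictMono.range_inj f.2.2.1 g.2.2.1]
    ext v
    simp only [Set.mem_range]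
    rw [← wordOf_D, ← wordOf_D, hw]
  apply Subtype.ext
  ext x
  rcases x with i | i
  · exact congrArg Fin.val (congrFun hU i)
  · exact congrArg Fin.val (congrFun hD i)

open DyckStep in
theorem exists_f {l : ℕ} (c : Fin (2 * l) → DyckStep)
    (hU : (List.ofFn c).count U = l) (hD : (List.ofFn c).count D = l) :
    ∃ f : Fin l ⊕ Fin l ≃ Fin (2 * l), StrictMono (fun i => f (Sum.inl i)) ∧
    StrictMono (fun i => f (Sum.inr i)) ∧ wordOf f = c := by
  have h : (List.ofFn c).take (2 * l) = List.ofFn c :=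
    List.take_of_length_le (by simp)
  rw [← h, aux_count] at hU hD
  set S := (Finset.univ.filter (fun v : Fin (2 * l) => v.1 < 2 * l ∧ c v = U)) with hS
  set T := (Finset.univ.filter (fun v : Fin (2 * l) => v.1 < 2 * l ∧ c v = D)) with hT
  have hs : ∀ i, c (S.orderEmbOfFin hU i) = U := by
    intro i
    have := Finset.orderEmbOfFin_mem S hU i
    exact ((Finset.mem_filter.1 this).2).2
  have ht : ∀ i, c (T.orderEmbOfFin hD i) = D := by
    intro i
    have := Finset.orderEmbOfFin_mem T hD i
    exact ((Finset.mem_filter.1 this).2).2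
  have hinj : Function.Injective
      (Sum.elim (fun i => S.orderEmbOfFin hU i) (fun i => T.orderEmbOfFin hD i)) := by
    rintro (i | i) (j | j) hij
    · simpa using hij
    · have h1 := hs i
      have h2 := ht j
      simp only [Sum.elim_inl, Sum.elim_inr] at hij
      rw [hij, h2] at h1
      cases h1
    · have h1 := hs j
      have h2 := ht i
      simp only [Sum.elim_inl, Sum.elim_inr] at hij
      rw [← hij, h2] at h1
      cases h1
    · simpa using hij
  have hb := (Fintype.bijective_iff_injective_and_card _).2 ⟨hinj, by simp; omega⟩
  refine ⟨Equiv.ofBijective _ hb, ?_, ?_, ?_⟩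
  · exact (S.orderEmbOfFin hU).strictMono
  · exact (T.orderEmbOfFin hD).strictMono
  · ext v
    obtain ⟨x, rfl⟩ := (Equiv.ofBijective _ hb).surjective v
    rcases x with i | i
    · rw [(wordOf_U _ _).2 ⟨i, rfl⟩]; exact (hs i).symm
    · rw [(wordOf_D _ _).2 ⟨i, rfl⟩]; exact (ht i).symm

open DyckStep in
theorem dyckOf_surj {l : ℕ} : Function.Surjective (dyckOf (l := l)) := by
  rintro ⟨p, hp⟩
  have hp0 : p ≠ 0 := by rintro rfl; simp at hp
  have hc := DyckWord.cons_tail_dropLast_concat hp0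
  have hlen := p.two_mul_semilength_eq_length
  have hcu : p.toList.count U = l + 1 := hp
  have hcd : p.toList.count D = l + 1 := by rw [← p.semilength_eq_count_D]; exact hp
  have hpre := p.count_D_le_count_U
  set L := p.toList.dropLast.tail with hL
  rw [← hc] at hcu hcd hpre
  have hLl : L.length = 2 * l := by simp [hL]; omega
  clear_value L
  obtain ⟨c, rfl⟩ : ∃ c : Fin (2 * l) → DyckStep, L = List.ofFn c := by
    refine ⟨fun i => L[i.1]'(by omega), ?_⟩
    apply List.ext_getElem <;> simp [hLl]
  obtain ⟨f, h1, h2, h3⟩ := exists_f c (by simpa using hcu) (by simpa using hcd)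
  refine ⟨⟨f, h1, h2, (wordOf_inter f h1 h2).2 ?_⟩, ?_⟩
  · intro k
    rw [h3]
    by_cases hk : k ≤ 2 * l
    · have := hpre (k + 1)
      rw [List.cons_append, List.take_succ_cons,
        List.take_append_of_le_length (by simpa using hk)] at this
      simpa using this
    · rw [List.take_of_length_le (by simp; omega)]
      have a1 : (List.ofFn c).count U = l := by simpa using hcu
      have a2 : (List.ofFn c).count D = l := by simpa using hcd
      omega
  · apply Subtype.ext
    apply DyckWord.ext
    rw [← hc]
    simp [dyckOf, h3]

theorem card_GG (l : ℕ) : Nat.card (GG l) = catalan (l + 1) := by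
  rw [Nat.card_eq_of_bijective _ ⟨dyckOf_inj, dyckOf_surj (l := l)⟩, Nat.card_eq_fintype_card,
    DyckWord.card_dyckWord_semilength_eq_catalan]

/-- Position map. -/
def posMap (l : ℕ) : Fin l ⊕ Fin l → Fin (2 * l) :=
  Sum.elim (fun i => ⟨min (2 * i.1 + 2) (2 * l - 1), by omega⟩) (fun i => ⟨2 * i.1 - 1, by omega⟩)

theorem posMap_bij (l : ℕ) : Function.Bijective (posMap l) := by
  rw [Fintype.bijective_iff_injective_and_card]
  constructor
  · rintro (i | i) (j | j) hij <;> simp [posMap] at hij ⊢ <;> omega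
  · simp; omega

theorem key_iff (l : ℕ) (hl : 2 ≤ l) (w : Equiv.Perm (Fin (2 * l))) :
    (UpDown w ∧ occ321 w = ∅) ↔
      (StrictMono (fun i => w (posMap l (Sum.inl i))) ∧
        StrictMono (fun i => w (posMap l (Sum.inr i))) ∧
        ∀ i j : Fin l, j.1 = i.1 + 1 → w (posMap l (Sum.inl i)) < w (posMap l (Sum.inr j))) := by
  obtain ⟨m, rfl⟩ : ∃ m, l = m + 1 := ⟨l - 1, by omega⟩
  constructor
  · rintro ⟨hud, hav⟩
    have av : ∀ i j k : Fin (2 * (m + 1)), i < j → j < k → w k < w j → w j < w i → False := by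
      intro i j k h1 h2 h3 h4
      have : (i, j, k) ∈ occ321 w := ⟨h1, h2, h3, h4⟩
      rw [hav] at this
      exact this
    have up : ∀ p q : Fin (2 * (m + 1)), q.1 = p.1 + 1 → p.1 % 2 = 0 → w p < w q := by
      rintro ⟨p, hp⟩ ⟨q, hq⟩ h1 h2
      simp only at h1 h2
      subst h1
      have := hud p hq
      rwa [if_pos h2] at this
    have dn : ∀ p q : Fin (2 * (m + 1)), q.1 = p.1 + 1 → p.1 % 2 = 1 → w q < w p := by
      rintro ⟨p, hp⟩ ⟨q, hq⟩ h1 h2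
      simp only at h1 h2
      subst h1
      have := hud p hq
      rwa [if_neg (by omega)] at this
    have lt_of : ∀ p q : Fin (2 * (m + 1)), p.1 ≠ q.1 → ¬ (w q < w p) → w p < w q := by
      intro p q h1 h2
      refine lt_of_le_of_ne (not_lt.1 h2) (fun h => h1 ?_)
      rw [w.injective h]
    refine ⟨?_, ?_, ?_⟩
    · rw [Fin.strictMono_iff_lt_succ]
      intro i
      have hi := i.2
      by_cases h : i.1 + 1 = m
      · apply up <;> simp [posMap] <;> omega
      · apply lt_of
        · simp [posMap]; omega
        · intro hc
          refine av ⟨2 * i.1 + 1, by omega⟩ _ _ ?_ ?_ hc (dn _ _ ?_ ?_)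
          all_goals simp [posMap, Fin.lt_def]
          all_goals omega
    · rw [Fin.strictMono_iff_lt_succ]
      intro i
      have hi := i.2
      by_cases h : i.1 = 0
      · apply up <;> simp [posMap] <;> omega
      · apply lt_of
        · simp [posMap]; omega
        · intro hc
          refine av _ _ ⟨2 * i.1 + 2, by omega⟩ ?_ ?_ (dn _ _ ?_ ?_) hc
          all_goals simp [posMap, Fin.lt_def]
          all_goals omega
    · intro i j hij
      have hj := j.2
      apply dn <;> simp [posMap] <;> omega
  · rintro ⟨h1, h2, h3⟩
    have pl : ∀ (p : Fin (2 * (m + 1))) (i : ℕ) (hi : i < m + 1),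
        p.1 = min (2 * i + 2) (2 * (m + 1) - 1) → p = posMap (m + 1) (Sum.inl ⟨i, hi⟩) := by
      intro p i hi h
      exact Fin.ext h
    have pr : ∀ (p : Fin (2 * (m + 1))) (i : ℕ) (hi : i < m + 1),
        p.1 = 2 * i - 1 → p = posMap (m + 1) (Sum.inr ⟨i, hi⟩) := by
      intro p i hi h
      exact Fin.ext h
    constructor
    · intro i hi
      split_ifs with hp
      · by_cases h0 : i = 0
        · subst h0
          rw [pr ⟨0, _⟩ 0 (by omega) (by simp), pr ⟨0 + 1, _⟩ 1 (by omega) (by simp)]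
          exact h2 (by simp [Fin.lt_def])
        · by_cases hm : i = 2 * m
          · rw [pl ⟨i, _⟩ (m - 1) (by omega) (by simp; omega),
              pl ⟨i + 1, _⟩ m (by omega) (by simp; omega)]
            exact h1 (by simp [Fin.lt_def]; omega)
          · rw [pl ⟨i, _⟩ (i / 2 - 1) (by omega) (by simp; omega),
              pr ⟨i + 1, _⟩ (i / 2 + 1) (by omega) (by simp; omega)]
            exact lt_trans (h3 _ ⟨i / 2, by omega⟩ (by simp; omega)) (h2 (by simp [Fin.lt_def]))
      · rw [pl ⟨i + 1, _⟩ (i / 2) (by omega) (by simp; omega),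
          pr ⟨i, _⟩ (i / 2 + 1) (by omega) (by simp; omega)]
        exact h3 _ _ rfl
    · rw [Set.eq_empty_iff_forall_notMem]
      rintro ⟨p, q, r⟩ ⟨hpq, hqr, hw1, hw2⟩
      simp only at hpq hqr hw1 hw2
      have ml : ∀ i j, posMap (m + 1) (Sum.inl i) < posMap (m + 1) (Sum.inl j) →
          w (posMap (m + 1) (Sum.inl i)) < w (posMap (m + 1) (Sum.inl j)) := by
        intro i j h
        apply h1
        simp only [posMap, Fin.lt_def, Sum.elim_inl, Sum.elim_inr] at h ⊢
        omega
      have mr : ∀ i j, posMap (m + 1) (Sum.inr i) < posMap (m + 1) (Sum.inr j) →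
          w (posMap (m + 1) (Sum.inr i)) < w (posMap (m + 1) (Sum.inr j)) := by
        intro i j h
        apply h2
        simp only [posMap, Fin.lt_def, Sum.elim_inl, Sum.elim_inr] at h ⊢
        omega
      have hpr := hpq.trans hqr
      have hw3 := hw1.trans hw2
      obtain ⟨x, rfl⟩ := (posMap_bij (m + 1)).2 p
      obtain ⟨y, rfl⟩ := (posMap_bij (m + 1)).2 q
      obtain ⟨z, rfl⟩ := (posMap_bij (m + 1)).2 r
      rcases x with x | x <;> rcases y with y | y
      · exact lt_asymm (ml _ _ hpq) hw2
      · rcases z with z | z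
        · exact lt_asymm (ml _ _ hpr) hw3
        · exact lt_asymm (mr _ _ hqr) hw1
      · rcases z with z | z
        · exact lt_asymm (ml _ _ hqr) hw1
        · exact lt_asymm (mr _ _ hpr) hw3
      · exact lt_asymm (mr _ _ hpq) hw2

theorem stmt3 (l : ℕ) (hl : 2 ≤ l) :
    Nat.card {w : Equiv.Perm (Fin (2 * l)) // UpDown w ∧ occ321 w = ∅} = catalan (l + 1) := by
  rw [← card_GG]
  apply Nat.card_congr
  exact Equiv.subtypeEquiv
    ((Equiv.ofBijective _ (posMap_bij l)).symm.equivCongr (Equiv.refl _))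
    (fun w => key_iff l hl w)
end

section
/- For every ℓ ≥ 1, the number of 321-avoiding alternating (up-down) permutations of length 2ℓ+1 is the Catalan number C_{ℓ+1}. -/
theorem count_take_eq (q : List DyckStep) (x : DyckStep) (k : ℕ) :
    (q.take k).count x = ((Finset.range k).filter (fun v => q[v]? = some x)).card := by
  induction k with
  | zero => simp
  | succ k ih =>
    rw [List.take_add_one, List.count_append, ih, Finset.range_add_one, Finset.filter_insert]
    by_cases h : q[k]? = some x
    · simp [h]
    · rw [if_neg h]
      have : List.count x (q[k]?.toList) = 0 := by
        rw [List.count_eq_zero]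
        simpa using h
      omega

theorem count_take_enum {m : ℕ} (q : List DyckStep) (x : DyckStep) (k : ℕ) (a : Fin m → ℕ)
    (ha : Function.Injective a) (h : ∀ v, q[v]? = some x ↔ ∃ i, a i = v) :
    (q.take k).count x = (Finset.univ.filter (fun i => a i < k)).card := by
  rw [count_take_eq, ← Finset.card_image_of_injective _ ha]
  congr 1
  ext v
  simp only [Finset.mem_filter, Finset.mem_range, Finset.mem_image, Finset.mem_univ, true_and, h]
  constructor
  · rintro ⟨hv, i, rfl⟩
    exact ⟨i, hv, rfl⟩
  · rintro ⟨i, hi, rfl⟩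
    exact ⟨hi, i, rfl⟩

/-- top row positions -/
def pa {l : ℕ} (i : Fin (l + 1)) : Fin (2 * l + 1) := ⟨2 * i.val - 1, by omega⟩
/-- bottom row positions -/
def pb {l : ℕ} (i : Fin l) : Fin (2 * l + 1) := ⟨2 * i.val + 2, by omega⟩

theorem pos_cases {l : ℕ} (x : Fin (2 * l + 1)) :
    ((x.val = 0 ∨ x.val % 2 = 1) ∧ ∃ i, pa i = x) ∨
      (¬ (x.val = 0 ∨ x.val % 2 = 1) ∧ ∃ i : Fin l, pb i = x) := by
  by_cases h : x.val = 0 ∨ x.val % 2 = 1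
  · left
    refine ⟨h, ⟨(x.val + 1) / 2, by omega⟩, ?_⟩
    ext
    simp only [pa]
    omega
  · right
    refine ⟨h, ⟨x.val / 2 - 1, by omega⟩, ?_⟩
    ext
    simp only [pb]
    omega

theorem pa_isA {l : ℕ} (i : Fin (l + 1)) : ((pa i).val = 0 ∨ (pa i).val % 2 = 1) := by
  simp only [pa]; omega

theorem pb_not {l : ℕ} (i : Fin l) : ¬ ((pb i).val = 0 ∨ (pb i).val % 2 = 1) := by
  simp only [pb]; omega

theorem pa_lt {l : ℕ} {i j : Fin (l + 1)} (h : pa i < pa j) : i < j := by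
  simp only [pa, Fin.mk_lt_mk] at h
  rw [Fin.lt_def]; omega

theorem pb_lt {l : ℕ} {i j : Fin l} (h : pb i < pb j) : i < j := by
  simp only [pb, Fin.mk_lt_mk] at h
  rw [Fin.lt_def]; omega

theorem good_iff {l : ℕ} (w : Equiv.Perm (Fin (2 * l + 1))) :
    (UpDown w ∧ occ321 w = ∅) ↔
      StrictMono (fun i => w (pa i)) ∧ StrictMono (fun i => w (pb i)) ∧
        ∀ i : Fin l, w (pb i) < w (pa i.succ) := by
  constructor
  · rintro ⟨hu, ho⟩
    have h3 : ∀ i j k, i < j → j < k → w k < w j → ¬ w j < w i := by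
      intro i j k h1 h2 h3 h4
      have : (i, j, k) ∈ occ321 w := ⟨h1, h2, h3, h4⟩
      rw [ho] at this
      exact this
    have hd : ∀ i : Fin l, w (pb i) < w (pa i.succ) := by
      intro i
      have := hu (2 * i.val + 1) (by omega)
      rw [if_neg (by omega)] at this
      exact this
    have hpos : ∀ i j : Fin l, i < j → w (pa i.succ) < w (pa j.succ) := by
      intro i j hij
      by_contra hc
      have hne : w (pa i.succ) ≠ w (pa j.succ) := by
        intro he
        have := w.injective he
        simp only [pa, Fin.mk.injEq, Fin.val_succ] at this
        rw [Fin.lt_def] at hij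
        omega
      refine h3 (pa i.succ) (pa j.succ) (pb j) ?_ ?_ (hd j) (lt_of_le_of_ne (not_lt.mp hc) hne.symm)
      · rw [Fin.lt_def] at *
        simp only [pa, Fin.val_succ]
        omega
      · rw [Fin.lt_def] at *
        simp only [pa, pb, Fin.val_succ]
        omega
    refine ⟨?_, ?_, hd⟩
    · intro i j hij
      show w (pa i) < w (pa j)
      obtain ⟨j', rfl⟩ := Fin.exists_succ_eq.mpr (Fin.ne_zero_of_lt hij)
      rcases Fin.eq_zero_or_eq_succ i with rfl | ⟨i', rfl⟩
      · have h0 : 0 < l := j'.pos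
        have h01 : w (pa 0) < w (pa (Fin.succ ⟨0, h0⟩)) := by
          have := hu 0 (by omega)
          rw [if_pos (by omega)] at this
          exact this
        by_cases hj : j' = ⟨0, h0⟩
        · rw [hj]; exact h01
        · refine h01.trans (hpos _ _ ?_)
          rw [Fin.lt_def]
          rw [Fin.ext_iff] at hj
          simp only at hj ⊢
          omega
      · exact hpos _ _ (Fin.succ_lt_succ_iff.mp hij)
    · intro i j hij
      show w (pb i) < w (pb j)
      by_contra hc
      have hne : w (pb i) ≠ w (pb j) := by
        intro he
        have := w.injective he
        simp only [pb, Fin.mk.injEq] at this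
        rw [Fin.lt_def] at hij
        omega
      refine h3 (pa i.succ) (pb i) (pb j) ?_ ?_ (lt_of_le_of_ne (not_lt.mp hc) hne.symm) (hd i)
      · rw [Fin.lt_def]
        simp only [pa, pb, Fin.val_succ]
        omega
      · rw [Fin.lt_def] at *
        simp only [pb]
        omega
  · rintro ⟨ha, hb, hd⟩
    constructor
    · intro i hi
      split_ifs with h
      · by_cases h0 : i = 0
        · subst h0
          exact ha (show (0 : Fin (l + 1)) < ⟨1, by omega⟩ by rw [Fin.lt_def]; simp)
        · obtain ⟨m, rfl⟩ : ∃ m, i = 2 * m + 2 := ⟨i / 2 - 1, by omega⟩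
          have h1 := hd ⟨m, by omega⟩
          have h2 := ha (show (Fin.succ ⟨m, by omega⟩ : Fin (l + 1)) < ⟨m + 2, by omega⟩ by
            rw [Fin.lt_def]; simp)
          exact h1.trans h2
      · obtain ⟨m, rfl⟩ : ∃ m, i = 2 * m + 1 := ⟨i / 2, by omega⟩
        exact hd ⟨m, by omega⟩
    · rw [Set.eq_empty_iff_forall_notMem]
      rintro ⟨i, j, k⟩ ⟨h1, h2, h3, h4⟩
      simp only at h1 h2 h3 h4
      have A : ∀ i j, pa i < pa j → ¬ w (pa j) < w (pa i) :=
        fun i j h => (ha (pa_lt h)).not_gt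
      have B : ∀ i j, pb i < pb j → ¬ w (pb j) < w (pb i) :=
        fun i j h => (hb (pb_lt h)).not_gt
      rcases pos_cases i with ⟨-, i, rfl⟩ | ⟨-, i, rfl⟩ <;>
      rcases pos_cases j with ⟨-, j, rfl⟩ | ⟨-, j, rfl⟩ <;>
      rcases pos_cases k with ⟨-, k, rfl⟩ | ⟨-, k, rfl⟩ <;>
      first
      | exact A _ _ h1 h4
      | exact A _ _ h2 h3
      | exact A _ _ (h1.trans h2) (h3.trans h4)
      | exact B _ _ h1 h4
      | exact B _ _ h2 h3
      | exact B _ _ (h1.trans h2) (h3.trans h4)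

/-- the word of a permutation -/
def wd {l : ℕ} (w : Equiv.Perm (Fin (2 * l + 1))) : List DyckStep :=
  List.ofFn (fun v => if (w.symm v).val = 0 ∨ (w.symm v).val % 2 = 1 then DyckStep.D
    else DyckStep.U)

theorem wd_D {l : ℕ} (w : Equiv.Perm (Fin (2 * l + 1))) (v : ℕ) :
    (wd w)[v]? = some DyckStep.D ↔ ∃ i, (w (pa i)).val = v := by
  simp only [wd, List.getElem?_ofFn]
  constructor
  · intro h
    split_ifs at h with h1 h2
    · rcases pos_cases (w.symm ⟨v, h1⟩) with ⟨-, i, hi⟩ | ⟨hn, -⟩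
      · exact ⟨i, by rw [hi]; simp⟩
      · exact absurd h2 hn
    · simp at h
  · rintro ⟨i, rfl⟩
    rw [dif_pos (w (pa i)).isLt]
    simp only [Fin.eta, Equiv.symm_apply_apply, if_pos (pa_isA i)]

theorem wd_U {l : ℕ} (w : Equiv.Perm (Fin (2 * l + 1))) (v : ℕ) :
    (wd w)[v]? = some DyckStep.U ↔ ∃ i, (w (pb i)).val = v := by
  simp only [wd, List.getElem?_ofFn]
  constructor
  · intro h
    split_ifs at h with h1 h2
    · simp at h
    · rcases pos_cases (w.symm ⟨v, h1⟩) with ⟨hn, -⟩ | ⟨-, i, hi⟩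
      · exact absurd hn h2
      · exact ⟨i, by rw [hi]; simp⟩
  · rintro ⟨i, rfl⟩
    rw [dif_pos (w (pb i)).isLt]
    have := pb_not i
    simp only [Fin.eta, Equiv.symm_apply_apply, if_neg this]

theorem pa_inj {l : ℕ} : Function.Injective (pa (l := l)) := by
  intro i j h
  simp only [pa, Fin.mk.injEq] at h
  ext; omega

theorem pb_inj {l : ℕ} : Function.Injective (pb (l := l)) := by
  intro i j h
  simp only [pb, Fin.mk.injEq] at h
  ext; omega

theorem wd_countD {l : ℕ} (w : Equiv.Perm (Fin (2 * l + 1))) (k : ℕ) :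
    ((wd w).take k).count DyckStep.D =
      (Finset.univ.filter (fun i => (w (pa i)).val < k)).card :=
  count_take_enum _ _ _ (fun i => (w (pa i)).val)
    (Fin.val_injective.comp (w.injective.comp pa_inj)) (wd_D w)

theorem wd_countU {l : ℕ} (w : Equiv.Perm (Fin (2 * l + 1))) (k : ℕ) :
    ((wd w).take k).count DyckStep.U =
      (Finset.univ.filter (fun i => (w (pb i)).val < k)).card :=
  count_take_enum _ _ _ (fun i => (w (pb i)).val)
    (Fin.val_injective.comp (w.injective.comp pb_inj)) (wd_U w)

theorem wd_length {l : ℕ} (w : Equiv.Perm (Fin (2 * l + 1))) : (wd w).length = 2 * l + 1 := by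
  simp [wd]

theorem wd_totD {l : ℕ} (w : Equiv.Perm (Fin (2 * l + 1))) :
    (wd w).count DyckStep.D = l + 1 := by
  have := wd_countD w (2 * l + 1)
  rw [List.take_of_length_le (wd_length w).le] at this
  rw [this, Finset.filter_true_of_mem (fun i _ => Fin.isLt _)]
  simp

theorem wd_totU {l : ℕ} (w : Equiv.Perm (Fin (2 * l + 1))) :
    (wd w).count DyckStep.U = l := by
  have := wd_countU w (2 * l + 1)
  rw [List.take_of_length_le (wd_length w).le] at this
  rw [this, Finset.filter_true_of_mem (fun i _ => Fin.isLt _)]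
  simp

/-- the Dyck word of a good permutation -/
def toDyck {l : ℕ} (w : Equiv.Perm (Fin (2 * l + 1)))
    (hd : ∀ i : Fin l, w (pb i) < w (pa i.succ)) : DyckWord where
  toList := DyckStep.U :: wd w
  count_U_eq_count_D := by
    simp [wd_totD, wd_totU]
  count_D_le_count_U := by
    intro i
    cases i with
    | zero => simp
    | succ k =>
      simp only [List.take_succ_cons, List.count_cons, wd_countD, wd_countU]
      simp only [reduceCtorEq, beq_iff_eq, if_false, if_true, add_zero]
      have : (Finset.univ.filter (fun i => (w (pa i)).val < k)) ⊆
          insert 0 ((Finset.univ.filter (fun i => (w (pb i)).val < k)).image Fin.succ) := by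
        intro i hi
        simp only [Finset.mem_filter, Finset.mem_univ, true_and] at hi
        rcases Fin.eq_zero_or_eq_succ i with rfl | ⟨i', rfl⟩
        · simp
        · apply Finset.mem_insert_of_mem
          apply Finset.mem_image_of_mem
          simp only [Finset.mem_filter, Finset.mem_univ, true_and]
          exact lt_trans (hd i') hi
      exact (Finset.card_le_card this).trans ((Finset.card_insert_le _ _).trans
        (Nat.add_le_add_right Finset.card_image_le 1))

theorem exists_enum (q : List DyckStep) (x : DyckStep) (m : ℕ) (h : q.count x = m) :
    ∃ a : Fin m → ℕ, StrictMono a ∧ ∀ v, q[v]? = some x ↔ ∃ i, a i = v := by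
  have hc := count_take_eq q x q.length
  rw [List.take_length, h] at hc
  refine ⟨Finset.orderEmbOfFin _ hc.symm, OrderEmbedding.strictMono _, fun v => ?_⟩
  have := Finset.range_orderEmbOfFin _ hc.symm
  rw [Set.ext_iff] at this
  rw [← Set.mem_range, this v]
  simp only [Finset.coe_filter, Finset.mem_range, Set.mem_ofPred_eq]
  refine ⟨fun hv => ⟨?_, hv⟩, fun hv => hv.2⟩
  by_contra hlt
  rw [List.getElem?_eq_none (not_lt.mp hlt)] at hv
  simp at hv

theorem toDyck_surj {l : ℕ} (q : List DyckStep) (hD : q.count DyckStep.D = l + 1)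
    (hU : q.count DyckStep.U = l)
    (hle : ∀ k, (q.take k).count DyckStep.D ≤ (q.take k).count DyckStep.U + 1) :
    ∃ w : Equiv.Perm (Fin (2 * l + 1)), (UpDown w ∧ occ321 w = ∅) ∧ wd w = q := by
  have hlen : q.length = 2 * l + 1 := by
    have : ∀ q : List DyckStep, q.length = q.count DyckStep.D + q.count DyckStep.U := by
      intro q
      induction q with
      | nil => simp
      | cons s t ih => cases s <;> simp [ih] <;> omega
    rw [this, hD, hU]; omega
  obtain ⟨a, ha, haq⟩ := exists_enum q _ _ hD
  obtain ⟨b, hb, hbq⟩ := exists_enum q _ _ hU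
  have hlt : ∀ v x, q[v]? = some x → v < 2 * l + 1 := by
    intro v x hv
    by_contra hlt
    rw [List.getElem?_eq_none (by omega)] at hv
    simp at hv
  have hal : ∀ i, a i < 2 * l + 1 := fun i => hlt _ _ ((haq _).2 ⟨i, rfl⟩)
  have hbl : ∀ i, b i < 2 * l + 1 := fun i => hlt _ _ ((hbq _).2 ⟨i, rfl⟩)
  have hab : ∀ i j, a i ≠ b j := by
    intro i j h
    have h1 := (haq _).2 ⟨i, rfl⟩
    have h2 := (hbq _).2 ⟨j, rfl⟩
    rw [h, h2] at h1
    simp at h1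
  have hd : ∀ i : Fin l, b i < a i.succ := by
    intro i
    by_contra hc
    have hc : a i.succ < b i := lt_of_le_of_ne (not_lt.mp hc) (hab _ _)
    have := hle (b i)
    rw [count_take_enum q _ _ a ha.injective haq, count_take_enum q _ _ b hb.injective hbq] at this
    have e1 : (Finset.univ.filter (fun j => b j < b i)) = Finset.Iio i := by
      ext j; simp [hb.lt_iff_lt]
    have e2 : Finset.Iic i.succ ⊆ (Finset.univ.filter (fun j => a j < b i)) := by
      intro j hj
      simp only [Finset.mem_Iic, Finset.mem_filter, Finset.mem_univ, true_and] at *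
      exact lt_of_le_of_lt (ha.monotone hj) hc
    have e3 := Finset.card_le_card e2
    rw [e1] at this
    simp at this e3
    omega
  have hf : ∃ f : Fin (2 * l + 1) → Fin (2 * l + 1),
      (∀ i, f (pa i) = ⟨a i, hal i⟩) ∧ ∀ i, f (pb i) = ⟨b i, hbl i⟩ := by
    have : ∀ x : Fin (2 * l + 1), ∃ y : Fin (2 * l + 1),
        (∀ i, pa i = x → y = ⟨a i, hal i⟩) ∧ ∀ i, pb i = x → y = ⟨b i, hbl i⟩ := by
      intro x
      rcases pos_cases x with ⟨h, i, rfl⟩ | ⟨h, i, rfl⟩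
      · refine ⟨⟨a i, hal i⟩, fun j hj => by rw [pa_inj hj], fun j hj => ?_⟩
        exact absurd (hj ▸ h) (pb_not j)
      · refine ⟨⟨b i, hbl i⟩, fun j hj => ?_, fun j hj => by rw [pb_inj hj]⟩
        exact absurd (pa_isA j) (hj ▸ h)
    choose f h1 h2 using this
    exact ⟨f, fun i => h1 _ i rfl, fun i => h2 _ i rfl⟩
  obtain ⟨f, hfa, hfb⟩ := hf
  have hinj : Function.Injective f := by
    intro x y h
    rcases pos_cases x with ⟨-, i, rfl⟩ | ⟨-, i, rfl⟩ <;>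
    rcases pos_cases y with ⟨-, j, rfl⟩ | ⟨-, j, rfl⟩ <;>
    simp only [hfa, hfb, Fin.mk.injEq] at h
    · rw [ha.injective h]
    · exact absurd h (hab _ _)
    · exact absurd h.symm (hab _ _)
    · rw [hb.injective h]
  let w : Equiv.Perm (Fin (2 * l + 1)) := Equiv.ofBijective f (Finite.injective_iff_bijective.1 hinj)
  have hwa : ∀ i, w (pa i) = ⟨a i, hal i⟩ := hfa
  have hwb : ∀ i, w (pb i) = ⟨b i, hbl i⟩ := hfb
  refine ⟨w, (good_iff w).2 ⟨?_, ?_, ?_⟩, ?_⟩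
  · intro i j hij
    simp only [hwa]
    exact ha hij
  · intro i j hij
    simp only [hwb]
    exact hb hij
  · intro i
    rw [hwa, hwb]
    exact hd i
  · have key : ∀ (v : ℕ) (x : DyckStep), (wd w)[v]? = some x ↔ q[v]? = some x := by
      intro v x
      cases x
      · rw [wd_U, hbq]; simp only [hwb]
      · rw [wd_D, haq]; simp only [hwa]
    apply List.ext_getElem?
    intro v
    exact Option.ext (fun x => key v x)

theorem wd_inj {l : ℕ} (w w' : Equiv.Perm (Fin (2 * l + 1)))
    (h : UpDown w ∧ occ321 w = ∅) (h' : UpDown w' ∧ occ321 w' = ∅) (he : wd w = wd w') :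
    w = w' := by
  rw [good_iff] at h h'
  have ea : (fun i => w (pa i)) = (fun i => w' (pa i)) := by
    rw [← StrictMono.range_inj h.1 h'.1]
    ext v
    have h1 := wd_D w v
    rw [he, wd_D] at h1
    simpa [Fin.ext_iff] using h1.symm
  have eb : (fun i => w (pb i)) = (fun i => w' (pb i)) := by
    rw [← StrictMono.range_inj h.2.1 h'.2.1]
    ext v
    have h1 := wd_U w v
    rw [he, wd_U] at h1
    simpa [Fin.ext_iff] using h1.symm
  ext1 x
  rcases pos_cases x with ⟨-, i, rfl⟩ | ⟨-, i, rfl⟩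
  · exact congrFun ea i
  · exact congrFun eb i

theorem stmt4 (l : ℕ) (hl : 1 ≤ l) :
    Nat.card {w : Equiv.Perm (Fin (2 * l + 1)) // UpDown w ∧ occ321 w = ∅} = catalan (l + 1) := by
  rw [← DyckWord.card_dyckWord_semilength_eq_catalan, ← Nat.card_eq_fintype_card]
  let F : {w : Equiv.Perm (Fin (2 * l + 1)) // UpDown w ∧ occ321 w = ∅} →
      {p : DyckWord // p.semilength = l + 1} := fun w =>
    ⟨toDyck w.1 ((good_iff w.1).1 w.2).2.2, by
      simp [DyckWord.semilength, toDyck, wd_totU]⟩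
  refine Nat.card_congr (Equiv.ofBijective F ⟨?_, ?_⟩)
  · intro w w' h
    have h1 : DyckStep.U :: wd w.1 = DyckStep.U :: wd w'.1 :=
      congrArg (fun p => p.1.toList) h
    exact Subtype.ext (wd_inj _ _ w.2 w'.2 (List.cons.inj h1).2)
  · rintro ⟨⟨L, h1, h2⟩, h3⟩
    simp only [DyckWord.semilength] at h3
    cases L with
    | nil => simp at h3
    | cons s q =>
      cases s with
      | D => have := h2 1; simp at this
      | U =>
        obtain ⟨w, hw, hq⟩ := toDyck_surj (l := l) q
          (by rw [h1] at h3; simpa using h3) (by simpa using h3)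
          (fun k => by simpa using h2 (k + 1))
        refine ⟨⟨w, hw⟩, ?_⟩
        apply Subtype.ext
        apply DyckWord.ext
        show DyckStep.U :: wd w = _
        rw [hq]
end

section
/- For every ℓ ≥ 1, the number of 321-avoiding reverse-alternating (down-up) permutations of length 2ℓ+1 is the Catalan number C_{ℓ+1}. -/
namespace DU

def qpos (l : ℕ) (i : Fin (l + 1)) : Fin (2 * l + 1) :=
  ⟨min (2 * i.val + 1) (2 * l), by omega⟩

def ppos (l : ℕ) (i : Fin l) : Fin (2 * l + 1) := ⟨2 * i.val, by omega⟩

theorem pos_bij (l : ℕ) : Function.Bijective (Sum.elim (qpos l) (ppos l)) := by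
  rw [Fintype.bijective_iff_injective_and_card]
  constructor
  · rintro (a | a) (b | b) h <;>
      simp only [Sum.elim_inl, Sum.elim_inr, qpos, ppos, Fin.mk.injEq] at h
    · congr 1; ext; omega
    · omega
    · omega
    · congr 1; ext; omega
  · simp; omega

noncomputable def posEquiv (l : ℕ) : Fin (l + 1) ⊕ Fin l ≃ Fin (2 * l + 1) :=
  Equiv.ofBijective _ (pos_bij l)

def Good {l : ℕ} (w : Equiv.Perm (Fin (2 * l + 1))) : Prop :=
  StrictMono (w ∘ qpos l) ∧ StrictMono (w ∘ ppos l) ∧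
    ∀ i : Fin l, w (qpos l i.castSucc) < w (ppos l i)

theorem good_of {l : ℕ} (w : Equiv.Perm (Fin (2 * l + 1))) (h1 : DownUp w)
    (h2 : occ321 w = ∅) : Good w := by
  have no : ∀ x y z : Fin (2 * l + 1), x < y → y < z → w z < w y → w y < w x → False := by
    intro x y z a b c d
    have : (x, y, z) ∈ occ321 w := ⟨a, b, c, d⟩
    rw [h2] at this
    exact this
  have dn : ∀ i : Fin l, w (qpos l i.castSucc) < w (ppos l i) := by
    intro i
    have := h1 (2 * i.val) (by omega)
    rw [if_pos (by omega)] at this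
    have e : qpos l i.castSucc = ⟨2 * i.val + 1, by omega⟩ := by
      ext; simp only [qpos, Fin.val_castSucc]; omega
    rw [e]
    exact this
  refine ⟨?_, ?_, dn⟩
  · intro i j hij
    by_contra hc
    have hij' : i.val < j.val := hij
    have hi : i.val < l := by omega
    have hlt : qpos l i < qpos l j := by
      simp only [qpos, Fin.mk_lt_mk]; omega
    have hne : w (qpos l j) ≠ w (qpos l i) := fun h => hlt.ne' (w.injective h)
    have hle : w (qpos l j) < w (qpos l i) := lt_of_le_of_ne (not_lt.mp hc) hne
    refine no (ppos l ⟨i, hi⟩) (qpos l i) (qpos l j) ?_ hlt hle (dn ⟨i, hi⟩)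
    simp only [qpos, ppos, Fin.mk_lt_mk]; omega
  · intro i j hij
    by_contra hc
    have hij' : i.val < j.val := hij
    have hlt : ppos l i < ppos l j := by
      simp only [ppos, Fin.mk_lt_mk]; omega
    have hne : w (ppos l j) ≠ w (ppos l i) := fun h => hlt.ne' (w.injective h)
    have hle : w (ppos l j) < w (ppos l i) := lt_of_le_of_ne (not_lt.mp hc) hne
    refine no (ppos l i) (ppos l j) (qpos l j.castSucc) hlt ?_ (dn j) hle
    simp only [qpos, ppos, Fin.mk_lt_mk, Fin.val_castSucc]; omega

theorem of_good {l : ℕ} (w : Equiv.Perm (Fin (2 * l + 1))) (h : Good w) :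
    DownUp w ∧ occ321 w = ∅ := by
  obtain ⟨hq, hp, hd⟩ := h
  have mq : ∀ x y : Fin (2 * l + 1), x < y → (x.val % 2 = 1 ∨ x.val = 2 * l) →
      (y.val % 2 = 1 ∨ y.val = 2 * l) → w x < w y := by
    intro x y hxy hx hy
    have hxy' : x.val < y.val := hxy
    have := @hq ⟨x.val / 2, by omega⟩ ⟨y.val / 2, by omega⟩ (by
      simp only [Fin.mk_lt_mk]; omega)
    have ex : qpos l ⟨x.val / 2, by omega⟩ = x := by
      ext; simp only [qpos]; omega
    have ey : qpos l ⟨y.val / 2, by omega⟩ = y := by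
      ext; simp only [qpos]; omega
    simpa only [Function.comp, ex, ey] using this
  have mp : ∀ x y : Fin (2 * l + 1), x < y → ¬ (x.val % 2 = 1 ∨ x.val = 2 * l) →
      ¬ (y.val % 2 = 1 ∨ y.val = 2 * l) → w x < w y := by
    intro x y hxy hx hy
    have hxy' : x.val < y.val := hxy
    have := @hp ⟨x.val / 2, by omega⟩ ⟨y.val / 2, by omega⟩ (by
      simp only [Fin.mk_lt_mk]; omega)
    have ex : ppos l ⟨x.val / 2, by omega⟩ = x := by
      ext; simp only [ppos]; omega
    have ey : ppos l ⟨y.val / 2, by omega⟩ = y := by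
      ext; simp only [ppos]; omega
    simpa only [Function.comp, ex, ey] using this
  have dn : ∀ (a : ℕ) (ha : a < l), w ⟨2 * a + 1, by omega⟩ < w ⟨2 * a, by omega⟩ := by
    intro a ha
    have e : qpos l (Fin.castSucc ⟨a, ha⟩) = ⟨2 * a + 1, by omega⟩ := by
      ext; simp only [qpos, Fin.val_castSucc]; omega
    have := hd ⟨a, ha⟩
    rw [e] at this
    exact this
  constructor
  · intro i hi
    split_ifs with he
    · obtain ⟨a, rfl⟩ : ∃ a, i = 2 * a := ⟨i / 2, by omega⟩
      exact dn a (by omega)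
    · obtain ⟨a, rfl⟩ : ∃ a, i = 2 * a + 1 := ⟨i / 2, by omega⟩
      by_cases hl : a + 1 < l
      · refine (dn a (by omega)).trans (mp _ _ ?_ ?_ ?_) <;>
          simp only [Fin.mk_lt_mk] <;> omega
      · refine mq _ _ ?_ ?_ ?_ <;> simp only [Fin.mk_lt_mk] <;> omega
  · ext ⟨x, y, z⟩
    simp only [occ321, Set.mem_ofPred_eq, Set.mem_empty_iff_false, iff_false]
    rintro ⟨a, b, c, d⟩
    by_cases hx : (x.val % 2 = 1 ∨ x.val = 2 * l) <;>
    by_cases hy : (y.val % 2 = 1 ∨ y.val = 2 * l) <;>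
    by_cases hz : (z.val % 2 = 1 ∨ z.val = 2 * l)
    · exact absurd (mq x y a hx hy) d.asymm
    · exact absurd (mq x y a hx hy) d.asymm
    · exact absurd (mq x z (a.trans b) hx hz) (c.trans d).asymm
    · exact absurd (mp y z b hy hz) c.asymm
    · exact absurd (mq y z b hy hz) c.asymm
    · exact absurd (mp x z (a.trans b) hx hz) (c.trans d).asymm
    · exact absurd (mp x y a hx hy) d.asymm
    · exact absurd (mp x y a hx hy) d.asymm

def Ballot {l : ℕ} (S : Finset (Fin (2 * l + 1))) : Prop :=
  S.card = l + 1 ∧ ∀ k : ℕ,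
    (Finset.univ.filter fun v : Fin (2 * l + 1) => v.val < k ∧ v ∉ S).card ≤
    (Finset.univ.filter fun v : Fin (2 * l + 1) => v.val < k ∧ v ∈ S).card

def qset {l : ℕ} (w : Equiv.Perm (Fin (2 * l + 1))) : Finset (Fin (2 * l + 1)) :=
  Finset.univ.image (w ∘ qpos l)

theorem qpos_inj (l : ℕ) : Function.Injective (qpos l) := by
  intro a b h
  exact Sum.inl_injective ((pos_bij l).1 (a₁ := Sum.inl a) (a₂ := Sum.inl b) h)

theorem ppos_inj (l : ℕ) : Function.Injective (ppos l) := by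
  intro a b h
  exact Sum.inr_injective ((pos_bij l).1 (a₁ := Sum.inr a) (a₂ := Sum.inr b) h)

theorem not_mem_qset {l : ℕ} (w : Equiv.Perm (Fin (2 * l + 1))) (v) :
    v ∉ qset w ↔ ∃ i, w (ppos l i) = v := by
  obtain ⟨u, rfl⟩ := w.surjective v
  obtain ⟨s, rfl⟩ := (pos_bij l).2 u
  simp only [qset, Finset.mem_image, Finset.mem_univ, true_and, Function.comp,
    w.injective.eq_iff]
  rcases s with s | s
  · simp only [Sum.elim_inl]
    constructor
    · intro h; exact absurd ⟨s, rfl⟩ h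
    · rintro ⟨i, hi⟩
      have := (pos_bij l).1 (a₁ := Sum.inr i) (a₂ := Sum.inl s) hi
      cases this
  · simp only [Sum.elim_inr]
    constructor
    · intro _; exact ⟨s, rfl⟩
    · rintro _ ⟨i, hi⟩
      have := (pos_bij l).1 (a₁ := Sum.inl i) (a₂ := Sum.inr s) hi
      cases this

theorem mem_qset {l : ℕ} (w : Equiv.Perm (Fin (2 * l + 1))) (v) :
    v ∈ qset w ↔ ∃ i, w (qpos l i) = v := by
  simp [qset]

theorem card_in {l : ℕ} (w : Equiv.Perm (Fin (2 * l + 1))) (k : ℕ) :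
    (Finset.univ.filter fun v : Fin (2 * l + 1) => v.val < k ∧ v ∈ qset w).card =
    (Finset.univ.filter fun i : Fin (l + 1) => (w (qpos l i)).val < k).card := by
  symm
  apply Finset.card_bij (fun i _ => w (qpos l i))
  · intro i hi
    simp only [Finset.mem_filter, Finset.mem_univ, true_and] at hi ⊢
    exact ⟨hi, (mem_qset _ _).2 ⟨i, rfl⟩⟩
  · intro a _ b _ h
    exact qpos_inj l (w.injective h)
  · intro v hv
    simp only [Finset.mem_filter, Finset.mem_univ, true_and] at hv
    obtain ⟨i, rfl⟩ := (mem_qset _ _).1 hv.2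
    exact ⟨i, by simpa using hv.1, rfl⟩

theorem card_out {l : ℕ} (w : Equiv.Perm (Fin (2 * l + 1))) (k : ℕ) :
    (Finset.univ.filter fun v : Fin (2 * l + 1) => v.val < k ∧ v ∉ qset w).card =
    (Finset.univ.filter fun i : Fin l => (w (ppos l i)).val < k).card := by
  symm
  apply Finset.card_bij (fun i _ => w (ppos l i))
  · intro i hi
    simp only [Finset.mem_filter, Finset.mem_univ, true_and] at hi ⊢
    exact ⟨hi, (not_mem_qset _ _).2 ⟨i, rfl⟩⟩
  · intro a _ b _ h
    exact ppos_inj l (w.injective h)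
  · intro v hv
    simp only [Finset.mem_filter, Finset.mem_univ, true_and] at hv
    obtain ⟨i, rfl⟩ := (not_mem_qset _ _).1 hv.2
    exact ⟨i, by simpa using hv.1, rfl⟩

theorem ballot_iff {l : ℕ} (w : Equiv.Perm (Fin (2 * l + 1)))
    (hq : StrictMono (w ∘ qpos l)) (hp : StrictMono (w ∘ ppos l)) :
    (∀ i : Fin l, w (qpos l i.castSucc) < w (ppos l i)) ↔ Ballot (qset w) := by
  have hc : (qset w).card = l + 1 := by
    rw [qset, Finset.card_image_of_injective _ (w.injective.comp (qpos_inj l))]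
    simp
  simp only [Ballot, hc, true_and, card_in, card_out]
  constructor
  · intro h k
    apply Finset.card_le_card_of_injOn Fin.castSucc
    · intro i hi
      simp only [Finset.coe_filter, Finset.mem_univ, true_and, Set.mem_ofPred_eq] at hi ⊢
      exact lt_trans (h i) hi
    · exact (Fin.castSucc_injective l).injOn
  · intro h i
    by_contra hcon
    have hle : (w (ppos l i)).val ≤ (w (qpos l i.castSucc)).val := not_lt.mp hcon
    have hne : (w (ppos l i)).val ≠ (w (qpos l i.castSucc)).val := by
      intro h
      have := (pos_bij l).1 (a₁ := Sum.inr i) (a₂ := Sum.inl i.castSucc)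
        (w.injective (Fin.ext h))
      cases this
    have hk := h ((w (ppos l i)).val + 1)
    have h1 : (Finset.Iic i).card ≤
        (Finset.univ.filter fun j : Fin l => (w (ppos l j)).val < (w (ppos l i)).val + 1).card := by
      apply Finset.card_le_card
      intro j hj
      simp only [Finset.mem_Iic] at hj
      simp only [Finset.mem_filter, Finset.mem_univ, true_and]
      have : (w (ppos l j)).val ≤ (w (ppos l i)).val := hp.monotone hj
      omega
    have h2 : (Finset.univ.filter fun j : Fin (l + 1) =>
        (w (qpos l j)).val < (w (ppos l i)).val + 1).card ≤ (Finset.Iio i.castSucc).card := by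
      apply Finset.card_le_card
      intro j hj
      simp only [Finset.mem_filter, Finset.mem_univ, true_and] at hj
      simp only [Finset.mem_Iio]
      apply hq.lt_iff_lt.1
      show (w (qpos l j)).val < (w (qpos l i.castSucc)).val
      omega
    simp only [Fin.card_Iic, Fin.card_Iio, Fin.val_castSucc] at h1 h2
    omega

theorem perm_ballot (l : ℕ) :
    Nat.card {w : Equiv.Perm (Fin (2 * l + 1)) // DownUp w ∧ occ321 w = ∅} =
    Nat.card {S : Finset (Fin (2 * l + 1)) // Ballot S} := by
  have hg : ∀ w : {w : Equiv.Perm (Fin (2 * l + 1)) // DownUp w ∧ occ321 w = ∅}, Good w.1 :=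
    fun w => good_of w.1 w.2.1 w.2.2
  apply Nat.card_eq_of_bijective
    (fun w => (⟨qset w.1, (ballot_iff w.1 (hg w).1 (hg w).2.1).1 (hg w).2.2⟩ :
      {S : Finset (Fin (2 * l + 1)) // Ballot S}))
  constructor
  · intro a b hab
    have hab' : qset a.1 = qset b.1 := congrArg Subtype.val hab
    have e1 : a.1 ∘ qpos l = b.1 ∘ qpos l := by
      rw [← StrictMono.range_inj (hg a).1 (hg b).1]
      ext v
      have := mem_qset a.1 v
      rw [hab', mem_qset] at this
      exact this.symm
    have e2 : a.1 ∘ ppos l = b.1 ∘ ppos l := by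
      rw [← StrictMono.range_inj (hg a).2.1 (hg b).2.1]
      ext v
      have := not_mem_qset a.1 v
      rw [hab', not_mem_qset] at this
      exact this.symm
    apply Subtype.ext
    apply Equiv.ext
    intro x
    obtain ⟨s, rfl⟩ := (pos_bij l).2 x
    rcases s with s | s
    · exact congrFun e1 s
    · exact congrFun e2 s
  · rintro ⟨S, hS⟩
    have hSc : Sᶜ.card = l := by
      rw [Finset.card_compl, hS.1]; simp; omega
    let w : Equiv.Perm (Fin (2 * l + 1)) :=
      (posEquiv l).symm.trans (finSumEquivOfFinset hS.1 hSc)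
    have wq : ∀ i, w (qpos l i) = S.orderEmbOfFin hS.1 i := by
      intro i
      have : qpos l i = posEquiv l (Sum.inl i) := rfl
      simp [w, this]
    have wp : ∀ i, w (ppos l i) = Sᶜ.orderEmbOfFin hSc i := by
      intro i
      have : ppos l i = posEquiv l (Sum.inr i) := rfl
      simp [w, this]
    have hq : StrictMono (w ∘ qpos l) := by
      intro i j hij
      simpa [wq] using hij
    have hp : StrictMono (w ∘ ppos l) := by
      intro i j hij
      simpa [wp] using hij
    have hs : qset w = S := by
      ext v
      rw [mem_qset]
      simp only [wq]
      rw [← Set.mem_range, Finset.range_orderEmbOfFin]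
      simp
    refine ⟨⟨w, of_good w ⟨hq, hp, (ballot_iff w hq hp).2 (hs ▸ hS)⟩⟩, Subtype.ext hs⟩

open DyckStep in
theorem count_take_ofFn {n : ℕ} (g : Fin n → DyckStep) (a : DyckStep) (k : ℕ) :
    ((List.ofFn g).take k).count a =
      (Finset.univ.filter fun v : Fin n => v.val < k ∧ g v = a).card := by
  induction k with
  | zero => simp
  | succ k ih =>
    rw [List.take_add_one, List.count_append, ih]
    by_cases hk : k < n
    · have : (List.ofFn g)[k]? = some (g ⟨k, hk⟩) := by simp [hk]
      rw [this]
      by_cases hg : g ⟨k, hk⟩ = a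
      · have h : (Finset.univ.filter fun v : Fin n => v.val < k + 1 ∧ g v = a) =
          insert ⟨k, hk⟩ (Finset.univ.filter fun v : Fin n => v.val < k ∧ g v = a) := by
          ext v
          simp only [Finset.mem_filter, Finset.mem_univ, true_and, Finset.mem_insert, Fin.ext_iff]
          constructor
          · rintro ⟨h1, h2⟩
            by_cases hv : v.val = k
            · exact Or.inl hv
            · exact Or.inr ⟨by omega, h2⟩
          · rintro (h1 | h1)
            · have : v = ⟨k, hk⟩ := Fin.ext h1
              subst this
              exact ⟨by simp, hg⟩
            · exact ⟨by omega, h1.2⟩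
        rw [h, Finset.card_insert_of_notMem (by simp)]
        simp [hg]
      · have h : (Finset.univ.filter fun v : Fin n => v.val < k + 1 ∧ g v = a) =
          (Finset.univ.filter fun v : Fin n => v.val < k ∧ g v = a) := by
          ext v
          simp only [Finset.mem_filter, Finset.mem_univ, true_and]
          constructor
          · rintro ⟨h1, h2⟩
            by_cases hv : v.val = k
            · have : v = ⟨k, hk⟩ := Fin.ext hv
              subst this
              exact absurd h2 hg
            · exact ⟨by omega, h2⟩
          · exact fun h1 => ⟨by omega, h1.2⟩
        rw [h]
        simp [hg]
    · have : (List.ofFn g)[k]? = none := by simp; omega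
      rw [this]
      have h : (Finset.univ.filter fun v : Fin n => v.val < k + 1 ∧ g v = a) =
          (Finset.univ.filter fun v : Fin n => v.val < k ∧ g v = a) := by
        ext v
        simp only [Finset.mem_filter, Finset.mem_univ, true_and]
        have := v.2
        constructor <;> exact fun h1 => ⟨by omega, h1.2⟩
      rw [h]; simp

open DyckStep in
def steps {l : ℕ} (S : Finset (Fin (2 * l + 1))) : List DyckStep :=
  List.ofFn (fun v => if v ∈ S then U else D)

open DyckStep in
theorem steps_U {l : ℕ} (S : Finset (Fin (2 * l + 1))) (k : ℕ) :
    ((steps S).take k).count U =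
    (Finset.univ.filter fun v : Fin (2 * l + 1) => v.val < k ∧ v ∈ S).card := by
  rw [steps, count_take_ofFn]
  congr 1; ext v
  by_cases h : v ∈ S <;> simp [h]

open DyckStep in
theorem steps_D {l : ℕ} (S : Finset (Fin (2 * l + 1))) (k : ℕ) :
    ((steps S).take k).count D =
    (Finset.univ.filter fun v : Fin (2 * l + 1) => v.val < k ∧ v ∉ S).card := by
  rw [steps, count_take_ofFn]
  congr 1; ext v
  by_cases h : v ∈ S <;> simp [h]

theorem steps_length {l : ℕ} (S : Finset (Fin (2 * l + 1))) :
    (steps S).length = 2 * l + 1 := by simp [steps]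

open DyckStep in
theorem steps_U_all {l : ℕ} (S : Finset (Fin (2 * l + 1))) :
    (steps S).count U = S.card := by
  have := steps_U S (2 * l + 1)
  rw [List.take_of_length_le (by rw [steps_length])] at this
  rw [this]; congr 1; ext v; simp; omega

open DyckStep in
theorem count_add (L : List DyckStep) : L.count U + L.count D = L.length := by
  induction L with
  | nil => simp
  | cons a L ih => cases a <;> simp <;> omega

open DyckStep in
theorem steps_D_all {l : ℕ} (S : Finset (Fin (2 * l + 1))) (h : S.card = l + 1) :
    (steps S).count D = l := by
  have := count_add (steps S)
  rw [steps_U_all, steps_length] at this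
  omega

open DyckStep in
def word {l : ℕ} (S : Finset (Fin (2 * l + 1))) (h : Ballot S) : DyckWord where
  toList := steps S ++ [D]
  count_U_eq_count_D := by
    simp [steps_U_all, steps_D_all S h.1, h.1]
  count_D_le_count_U := by
    intro i
    by_cases hi : i ≤ 2 * l + 1
    · rw [List.take_append_of_le_length (by rw [steps_length]; exact hi), steps_U, steps_D]
      exact h.2 i
    · rw [List.take_of_length_le (by simp [steps_length]; omega)]
      simp [steps_U_all, steps_D_all S h.1, h.1]

open DyckStep in
theorem ballot_dyck (l : ℕ) :
    Nat.card {S : Finset (Fin (2 * l + 1)) // Ballot S} =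
    Nat.card {p : DyckWord // p.semilength = l + 1} := by
  apply Nat.card_eq_of_bijective (fun S => (⟨word S.1 S.2, by
      simp [DyckWord.semilength, word, steps_U_all, S.2.1]⟩ :
        {p : DyckWord // p.semilength = l + 1}))
  constructor
  · rintro ⟨S, hS⟩ ⟨T, hT⟩ h
    have h' : steps S ++ [D] = steps T ++ [D] :=
      congrArg (fun p => p.1.toList) h
    have h2 := List.append_cancel_right h'
    have h3 := List.ofFn_injective h2
    apply Subtype.ext
    ext v
    have := congrFun h3 v
    by_cases a : v ∈ S <;> by_cases b : v ∈ T <;> simp_all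
  · rintro ⟨p, hp⟩
    have hU : p.toList.count U = l + 1 := hp
    have hD : p.toList.count D = l + 1 := by rw [← p.count_U_eq_count_D]; exact hU
    have hlen : p.toList.length = 2 * l + 2 := by rw [← count_add]; omega
    let S : Finset (Fin (2 * l + 1)) :=
      Finset.univ.filter fun v => p.toList[v.val]'(by omega) = U
    have hst : steps S = p.toList.take (2 * l + 1) := by
      apply List.ext_getElem
      · simp [steps_length, hlen]
      · intro i h1 h2
        simp only [steps, List.getElem_ofFn, S, Finset.mem_filter, Finset.mem_univ, true_and,
          List.getElem_take]
        split_ifs with h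
        · exact h.symm
        · exact ((DyckStep.dichotomy _).resolve_left h).symm
    have hbal := p.count_D_le_count_U (2 * l + 1)
    have hUle : (p.toList.take (2 * l + 1)).count U ≤ l + 1 := by
      rw [← hU]; exact (List.take_sublist _ _).count_le _
    have hadd := count_add (p.toList.take (2 * l + 1))
    have hl2 : (p.toList.take (2 * l + 1)).length = 2 * l + 1 := by simp [hlen]
    have hUeq : (p.toList.take (2 * l + 1)).count U = l + 1 := by omega
    have hB : Ballot S := by
      constructor
      · rw [← steps_U_all, hst, hUeq]
      · intro k
        rw [← steps_U, ← steps_D, hst, List.take_take]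
        exact p.count_D_le_count_U _
    refine ⟨⟨S, hB⟩, Subtype.ext (DyckWord.ext ?_)⟩
    show steps S ++ [D] = p.toList
    have hsplit : p.toList = p.toList.take (2 * l + 1) ++ [p.toList[2 * l + 1]'(by omega)] := by
      rw [← List.take_succ_eq_append_getElem, List.take_of_length_le (by omega)]
    have hcnt := congrArg (List.count U) hsplit
    rw [List.count_append, hU, hUeq] at hcnt
    have hlast : p.toList[2 * l + 1]'(by omega) = D := by
      refine (DyckStep.dichotomy _).resolve_left fun h => ?_
      rw [h] at hcnt
      simp at hcnt
    rw [hst]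
    conv_rhs => rw [hsplit, hlast]

end DU

theorem stmt6 (l : ℕ) (hl : 1 ≤ l) :
    Nat.card {w : Equiv.Perm (Fin (2 * l + 1)) // DownUp w ∧ occ321 w = ∅} = catalan (l + 1) := by
  rw [DU.perm_ballot, DU.ballot_dyck, Nat.card_eq_fintype_card,
    DyckWord.card_dyckWord_semilength_eq_catalan]
end

section
/- For every ℓ ≥ 2, the number of 321-avoiding alternating (up-down) permutations of length 2ℓ that end in their largest entry (i.e., w_{2ℓ} = 2ℓ) is the Catalan number C_ℓ. -/
/-- Monotone sequences of length `n` under the staircase and bounded by `m`. -/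
def stair (n m : ℕ) : Set (Fin n → ℕ) :=
  {d | Monotone d ∧ ∀ j : Fin n, d j ≤ j ∧ d j ≤ m}

theorem stair_finite (n m : ℕ) : (stair n m).Finite := by
  apply (Set.finite_Iic (fun _ : Fin n => m)).subset
  intro d hd j
  exact (hd.2 j).2

theorem stair_zero_left (m : ℕ) : (stair 0 m).ncard = 1 := by
  rw [Set.ncard_eq_one]
  refine ⟨Fin.elim0, ?_⟩
  ext d
  simp only [stair, Set.mem_ofPred_eq, Set.mem_singleton_iff]
  constructor
  · intro _
    exact Subsingleton.elim _ _
  · intro _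
    exact ⟨fun a => a.elim0, fun a => a.elim0⟩

theorem stair_zero_right (n : ℕ) : (stair n 0).ncard = 1 := by
  rw [Set.ncard_eq_one]
  refine ⟨fun _ => 0, ?_⟩
  ext d
  simp only [stair, Set.mem_ofPred_eq, Set.mem_singleton_iff]
  constructor
  · intro h
    funext j
    have := (h.2 j).2
    omega
  · rintro rfl
    exact ⟨fun _ _ _ => le_rfl, fun j => ⟨Nat.zero_le _, le_rfl⟩⟩

theorem stair_diag (n : ℕ) : stair (n + 1) (n + 1) = stair (n + 1) n := by
  ext d
  simp only [stair, Set.mem_ofPred_eq]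
  refine and_congr_right fun _ => forall_congr' fun j => ?_
  have := j.isLt
  omega

theorem stair_rec (n m : ℕ) (h : m + 1 ≤ n) :
    (stair (n + 1) (m + 1)).ncard = (stair (n + 1) m).ncard + (stair n (m + 1)).ncard := by
  have hinj : Function.Injective
      (fun d : Fin n → ℕ => (Fin.snoc (α := fun _ => ℕ) d (m + 1) : Fin (n + 1) → ℕ)) := by
    intro d e hde
    funext j
    have := congrFun hde j.castSucc
    simpa using this
  have key : stair (n + 1) (m + 1) = stair (n + 1) m ∪
      (fun d : Fin n → ℕ => (Fin.snoc (α := fun _ => ℕ) d (m + 1) : Fin (n + 1) → ℕ)) ''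
        stair n (m + 1) := by
    ext d
    simp only [Set.mem_union, Set.mem_image]
    constructor
    · intro hd
      by_cases hl : d (Fin.last n) ≤ m
      · left
        exact ⟨hd.1, fun j => ⟨(hd.2 j).1, (hd.1 (Fin.le_last j)).trans hl⟩⟩
      · right
        have hlast : d (Fin.last n) = m + 1 := by
          have := (hd.2 (Fin.last n)).2
          omega
        refine ⟨Fin.init d, ⟨?_, ?_⟩, ?_⟩
        · intro a b hab
          exact hd.1 (Fin.castSucc_le_castSucc_iff.mpr hab)
        · intro j
          exact hd.2 j.castSucc
        · rw [← hlast]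
          exact Fin.snoc_init_self d
    · rintro (hd | ⟨e, he, rfl⟩)
      · exact ⟨hd.1, fun j => ⟨(hd.2 j).1, (hd.2 j).2.trans (Nat.le_succ m)⟩⟩
      · refine ⟨?_, ?_⟩
        · intro a b hab
          induction b using Fin.lastCases with
          | last =>
            induction a using Fin.lastCases with
            | last => exact le_rfl
            | cast a => simpa using (he.2 a).2
          | cast b =>
            induction a using Fin.lastCases with
            | last =>
              exfalso
              have h1 := b.isLt
              have h2 : n ≤ b.val := hab
              omega
            | cast a => simpa using he.1 (Fin.castSucc_le_castSucc_iff.mp hab)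
        · intro j
          induction j using Fin.lastCases with
          | last => simpa using h
          | cast j => simpa using he.2 j
  rw [key, Set.ncard_union_eq ?_ (stair_finite _ _) ((stair_finite _ _).image _),
    Set.ncard_image_of_injective _ hinj]
  rw [Set.disjoint_left]
  rintro d hd ⟨e, he, rfl⟩
  have := (hd.2 (Fin.last n)).2
  simp at this

theorem stair_ballot (n : ℕ) : ∀ m ≤ n,
    (stair n m).ncard * (n + 1) = (n + 1 - m) * (n + m).choose m := by
  induction n with
  | zero =>
    intro m hm
    obtain rfl : m = 0 := by omega
    simp [stair_zero_left]
  | succ n ihn =>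
    have main : ∀ m ≤ n, (stair (n + 1) m).ncard * (n + 1 + 1) =
        (n + 1 + 1 - m) * (n + 1 + m).choose m := by
      intro m
      induction m with
      | zero => intro _; simp [stair_zero_right]
      | succ m ihm =>
        intro hm
        have h1 := ihm (by omega)
        have h2 := ihn (m + 1) hm
        rw [stair_rec n m hm]
        obtain ⟨k, rfl⟩ : ∃ k, n = m + 1 + k := ⟨n - (m + 1), by omega⟩
        generalize (stair (m + 1 + k + 1) m).ncard = A at *
        generalize (stair (m + 1 + k) (m + 1)).ncard = B at *
        have e1 : m + 1 + k + 1 + 1 - m = k + 3 := by omega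
        have e2 : m + 1 + k + 1 - (m + 1) = k + 1 := by omega
        have e3 : m + 1 + k + 1 + 1 - (m + 1) = k + 2 := by omega
        rw [e1] at h1
        rw [e2] at h2
        rw [e3]
        have c1 := Nat.choose_succ_succ (m + 1 + k + 1 + m) m
        have c2 := Nat.choose_succ_right_eq (m + 1 + k + 1 + m) m
        have e4 : m + 1 + k + (m + 1) = m + 1 + k + 1 + m := by omega
        have e5 : m + 1 + k + 1 + (m + 1) = m + 1 + k + 1 + m + 1 := by omega
        have e6 : m + 1 + k + 1 + m - m = m + k + 2 := by omega
        rw [e4] at h2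
        rw [e5, Nat.succ_eq_add_one] at *
        rw [c1]
        rw [e6] at c2
        simp only [Nat.succ_eq_add_one] at *
        generalize (m + 1 + k + 1 + m).choose m = X at *
        generalize (m + 1 + k + 1 + m).choose (m + 1) = Y at *
        have hpos : 0 < m + k + 2 := by omega
        apply Nat.eq_of_mul_eq_mul_right hpos
        zify at *
        linear_combination (m + k + 2 : ℤ) * h1 + (m + k + 3 : ℤ) * h2 - c2
    intro m hm
    rcases Nat.lt_or_ge n m with h | h
    · obtain rfl : m = n + 1 := by omega
      rw [stair_diag]
      have h1 := main n le_rfl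
      rw [h1]
      have c1 := Nat.choose_succ_succ (n + 1 + n) n
      have c2 : (n + 1 + n).choose (n + 1) = (n + 1 + n).choose n :=
        Nat.choose_symm_of_eq_add (by omega)
      have e1 : n + 1 + 1 - n = 2 := by omega
      have e2 : n + 1 + 1 - (n + 1) = 1 := by omega
      have e3 : n + 1 + (n + 1) = (n + 1 + n).succ := by omega
      rw [e1, e2, e3, c1, Nat.succ_eq_add_one, c2]
      ring
    · exact main m h

theorem stair_catalan (n : ℕ) : (stair n n).ncard = catalan n := by
  have h := stair_ballot n n le_rfl
  rw [catalan_eq_centralBinom_div, Nat.centralBinom]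
  have e : n + 1 - n = 1 := by omega
  rw [e, one_mul, ← two_mul] at h
  rw [← h, Nat.mul_div_cancel _ (Nat.succ_pos n)]

theorem exists_enum_s7 (C : Finset ℕ) : ∃ v : ℕ → ℕ,
    (∀ i j, i < j → j < C.card → v i < v j) ∧ (∀ x, x ∈ C ↔ ∃ i < C.card, v i = x) := by
  refine ⟨fun i => if h : i < C.card then C.orderEmbOfFin rfl ⟨i, h⟩ else 0, ?_, ?_⟩
  · intro i j hij hj
    have hi : i < C.card := hij.trans hj
    simp only [hi, hj, dif_pos]
    simpa using hij
  · intro x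
    have h := Finset.range_orderEmbOfFin C rfl
    have hx : x ∈ C ↔ x ∈ Set.range (C.orderEmbOfFin rfl) := by rw [h]; simp
    rw [hx]
    constructor
    · rintro ⟨i, rfl⟩
      exact ⟨i, i.isLt, by simp⟩
    · rintro ⟨i, hi, rfl⟩
      exact ⟨⟨i, hi⟩, by simp [hi]⟩

/-- Values of a permutation as natural numbers, extended by `0`. -/
def pval {n : ℕ} (w : Equiv.Perm (Fin n)) (i : ℕ) : ℕ :=
  if h : i < n then (w ⟨i, h⟩ : ℕ) else 0

theorem pval_inj {n : ℕ} (w : Equiv.Perm (Fin n)) {i j : ℕ} (hi : i < n) (hj : j < n)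
    (h : pval w i = pval w j) : i = j := by
  simp only [pval, hi, hj, dif_pos] at h
  have := w.injective (Fin.ext h)
  simpa using this

theorem pval_lt {n : ℕ} (w : Equiv.Perm (Fin n)) {i : ℕ} (hi : i < n) : pval w i < n := by
  simp only [pval, hi, dif_pos]
  exact (w ⟨i, hi⟩).isLt

theorem pval_surj {n : ℕ} (w : Equiv.Perm (Fin n)) {x : ℕ} (hx : x < n) :
    ∃ i < n, pval w i = x := by
  refine ⟨w.symm ⟨x, hx⟩, (w.symm ⟨x, hx⟩).isLt, ?_⟩
  simp [pval]

/-- The conditions of the theorem in terms of `pval`. -/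
def Good (l : ℕ) (f : ℕ → ℕ) : Prop :=
  (∀ i, i + 1 < 2 * l → (i % 2 = 0 → f i < f (i + 1)) ∧ (i % 2 = 1 → f (i + 1) < f i)) ∧
  (∀ i j k, i < j → j < k → k < 2 * l → f k < f j → f j < f i → False) ∧
  f (2 * l - 1) = 2 * l - 1

theorem good_iff_s7 (l : ℕ) (h : 2 * l - 1 < 2 * l) (w : Equiv.Perm (Fin (2 * l))) :
    (UpDown w ∧ occ321 w = ∅ ∧ w ⟨2 * l - 1, h⟩ = ⟨2 * l - 1, h⟩) ↔
      Good l (pval w) := by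
  unfold Good
  refine and_congr ?_ (and_congr ?_ ?_)
  · unfold UpDown
    refine forall_congr' fun i => forall_congr' fun h => ?_
    have h' : i < 2 * l := by omega
    simp only [pval, h, h', dif_pos]
    rcases Nat.mod_two_eq_zero_or_one i with h0 | h0 <;> simp [h0]
  · rw [Set.eq_empty_iff_forall_notMem]
    constructor
    · intro H i j k hij hjk hk h1 h2
      have hj : j < 2 * l := by omega
      have hi : i < 2 * l := by omega
      simp only [pval, hi, hj, hk, dif_pos] at h1 h2
      exact H (⟨i, hi⟩, ⟨j, hj⟩, ⟨k, hk⟩) ⟨hij, hjk, h1, h2⟩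
    · rintro H ⟨i, j, k⟩ ⟨hij, hjk, h1, h2⟩
      refine H i j k hij hjk k.isLt ?_ ?_
      · simpa [pval] using h1
      · simpa [pval] using h2
  · simp only [pval, h, dif_pos, Fin.ext_iff]

theorem good_peak_succ {l : ℕ} {w : Equiv.Perm (Fin (2 * l))} (hw : Good l (pval w))
    {i : ℕ} (hi : i < l) : pval w (2 * i - 1) < pval w (2 * (i + 1) - 1) := by
  obtain ⟨h1, h2, h3⟩ := hw
  rcases Nat.eq_zero_or_pos i with rfl | hp
  · exact (h1 0 (by omega)).1 rfl
  · rcases Nat.lt_or_ge (i + 1) l with hil | hil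
    · by_contra hc
      have hne : pval w (2 * (i + 1) - 1) ≠ pval w (2 * i - 1) := fun h => by
        have := pval_inj w (by omega) (by omega) h
        omega
      have h4 := (h1 (2 * (i + 1) - 1) (by omega)).2 (by omega)
      exact h2 (2 * i - 1) (2 * (i + 1) - 1) (2 * (i + 1) - 1 + 1) (by omega) (by omega)
        (by omega) h4 (by omega)
    · obtain rfl : l = i + 1 := by omega
      rw [h3]
      have h4 := pval_lt w (i := 2 * i - 1) (by omega)
      have hne : pval w (2 * (i + 1) - 1) ≠ pval w (2 * i - 1) := fun h => by
        have := pval_inj w (by omega) (by omega) h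
        omega
      omega

theorem good_peak_mono {l : ℕ} {w : Equiv.Perm (Fin (2 * l))} (hw : Good l (pval w))
    {i j : ℕ} (hij : i < j) (hj : j ≤ l) : pval w (2 * i - 1) < pval w (2 * j - 1) := by
  induction j with
  | zero => omega
  | succ j ih =>
    have h := good_peak_succ hw (i := j) (by omega)
    rcases Nat.lt_or_ge i j with h' | h'
    · exact (ih h' (by omega)).trans h
    · obtain rfl : i = j := by omega
      exact h

theorem good_valley_mono {l : ℕ} {w : Equiv.Perm (Fin (2 * l))} (hw : Good l (pval w))
    {i j : ℕ} (hij : i < j) (hj : j + 1 < l) :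
    pval w (2 * i + 2) < pval w (2 * j + 2) := by
  by_contra hc
  have hne : pval w (2 * i + 2) ≠ pval w (2 * j + 2) := fun h => by
    have := pval_inj w (by omega) (by omega) h
    omega
  have h4 := (hw.1 (2 * i + 1) (by omega)).2 (by omega)
  exact hw.2.1 (2 * i + 1) (2 * i + 2) (2 * j + 2) (by omega) (by omega) (by omega)
    (by omega) h4

theorem good_peak_lower {l : ℕ} {w : Equiv.Perm (Fin (2 * l))} (hw : Good l (pval w))
    {i : ℕ} (hi : i < l) : 2 * i ≤ pval w (2 * i - 1) := by
  rcases Nat.eq_zero_or_pos i with rfl | hp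
  · omega
  have hsub : ((Finset.range (2 * i + 1)).erase (2 * i - 1)).image (pval w) ⊆
      Finset.range (pval w (2 * i - 1)) := by
    intro x hx
    simp only [Finset.mem_image, Finset.mem_erase, Finset.mem_range] at hx ⊢
    obtain ⟨n, ⟨hn1, hn2⟩, rfl⟩ := hx
    rcases Nat.eq_zero_or_pos n with rfl | hn
    · exact good_peak_mono hw (i := 0) hp hi.le
    · rcases Nat.even_or_odd' n with ⟨k, rfl | rfl⟩
      · have h1 := (hw.1 (2 * i - 1) (by omega)).2 (by omega)
        have e : 2 * i - 1 + 1 = 2 * i := by omega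
        rw [e] at h1
        rcases Nat.lt_or_ge k i with h | h
        · have h2 := good_valley_mono hw (i := k - 1) (j := i - 1) (by omega) (by omega)
          have e1 : 2 * (k - 1) + 2 = 2 * k := by omega
          have e2 : 2 * (i - 1) + 2 = 2 * i := by omega
          rw [e1, e2] at h2
          omega
        · obtain rfl : k = i := by omega
          exact h1
      · have h2 := good_peak_mono hw (i := k + 1) (j := i) (by omega) (by omega)
        have e1 : 2 * (k + 1) - 1 = 2 * k + 1 := by omega
        rwa [e1] at h2
  have hcard := Finset.card_le_card hsub
  rw [Finset.card_image_of_injOn, Finset.card_erase_of_mem, Finset.card_range,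
    Finset.card_range] at hcard
  · omega
  · simp only [Finset.mem_range]; omega
  · intro a ha b hb hab
    simp only [Finset.coe_erase, Finset.coe_range, Set.mem_sdiff, Set.mem_Iio] at ha hb
    exact pval_inj w (by omega) (by omega) hab

theorem good_peak_upper {l : ℕ} {w : Equiv.Perm (Fin (2 * l))} (hw : Good l (pval w)) (k : ℕ) :
    ∀ i, i + k = l → pval w (2 * i - 1) + k ≤ 2 * l - 1 := by
  induction k with
  | zero =>
    intro i hi
    obtain rfl : i = l := by omega
    rw [hw.2.2]; omega
  | succ k ih =>
    intro i hi
    have h1 := ih (i + 1) (by omega)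
    have h2 := good_peak_succ hw (i := i) (by omega)
    omega

theorem good_unique {l : ℕ} {w w' : Equiv.Perm (Fin (2 * l))} (hw : Good l (pval w))
    (hw' : Good l (pval w')) (h : ∀ i < l, pval w (2 * i - 1) = pval w' (2 * i - 1)) :
    w = w' := by
  have h' : ∀ i ≤ l, pval w (2 * i - 1) = pval w' (2 * i - 1) := by
    intro i hi
    rcases Nat.lt_or_ge i l with h1 | h1
    · exact h i h1
    · obtain rfl : i = l := by omega
      rw [hw.2.2, hw'.2.2]
  have sub : ∀ u u' : Equiv.Perm (Fin (2 * l)),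
      (∀ i ≤ l, pval u (2 * i - 1) = pval u' (2 * i - 1)) →
      Set.range (fun i : Fin (l - 1) => pval u (2 * i + 2)) ⊆
      Set.range (fun i : Fin (l - 1) => pval u' (2 * i + 2)) := by
    rintro u u' hu x ⟨i, rfl⟩
    have hil := i.isLt
    obtain ⟨n, hn, hx⟩ := pval_surj u' (pval_lt u (i := 2 * i + 2) (by omega))
    rcases Nat.eq_zero_or_pos n with rfl | hn0
    · have := hu 0 (by omega)
      have := pval_inj u (i := 0) (j := 2 * i + 2) (by omega) (by omega) (by
        rw [← hx]; exact this)
      omega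
    · rcases Nat.even_or_odd' n with ⟨k, rfl | rfl⟩
      · refine ⟨⟨k - 1, by omega⟩, ?_⟩
        have e : 2 * (k - 1) + 2 = 2 * k := by omega
        simp only [e]
        exact hx
      · have h1 := hu (k + 1) (by omega)
        have e1 : 2 * (k + 1) - 1 = 2 * k + 1 := by omega
        rw [e1] at h1
        have := pval_inj u (i := 2 * k + 1) (j := 2 * i + 2) (by omega) (by omega) (by
          rw [← hx]; exact h1)
        omega
  have hr := (sub w w' h').antisymm (sub w' w fun i hi => (h' i hi).symm)
  have mono : ∀ u : Equiv.Perm (Fin (2 * l)), Good l (pval u) →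
      StrictMono (fun i : Fin (l - 1) => pval u (2 * i + 2)) := by
    intro u hu i j hij
    have hjl := j.isLt
    exact good_valley_mono hu hij (by omega)
  have he := ((mono w hw).range_inj (mono w' hw')).mp hr
  have all : ∀ n < 2 * l, pval w n = pval w' n := by
    intro n hn
    rcases Nat.eq_zero_or_pos n with rfl | hn0
    · exact h' 0 (by omega)
    · rcases Nat.even_or_odd' n with ⟨k, rfl | rfl⟩
      · have := congrFun he ⟨k - 1, by omega⟩
        have e : 2 * (k - 1) + 2 = 2 * k := by omega
        simpa only [e] using this
      · have h1 := h' (k + 1) (by omega)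
        have e1 : 2 * (k + 1) - 1 = 2 * k + 1 := by omega
        rwa [e1] at h1
  ext n
  have := all n n.isLt
  simpa [pval] using this

theorem good_exists {l : ℕ} (hl : 2 ≤ l) (p : ℕ → ℕ) (hmono : ∀ i j, i < j → j ≤ l → p i < p j)
    (hlow : ∀ i < l, 2 * i ≤ p i) (htop : p l = 2 * l - 1) :
    ∃ w : Equiv.Perm (Fin (2 * l)), Good l (pval w) ∧ ∀ i ≤ l, pval w (2 * i - 1) = p i := by
  have hinj : ∀ i j, i ≤ l → j ≤ l → p i = p j → i = j := by
    intro i j hi hj h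
    rcases lt_trichotomy i j with h1 | h1 | h1
    · have := hmono i j h1 hj; omega
    · exact h1
    · have := hmono j i h1 hi; omega
  have hlt : ∀ i ≤ l, p i < 2 * l := by
    intro i hi
    rcases Nat.lt_or_ge i l with h1 | h1
    · have := hmono i l h1 le_rfl; omega
    · obtain rfl : i = l := by omega
      omega
  set P := (Finset.range (l + 1)).image p with hP
  have hPsub : P ⊆ Finset.range (2 * l) := by
    intro x hx
    simp only [hP, Finset.mem_image, Finset.mem_range] at hx ⊢
    obtain ⟨i, hi, rfl⟩ := hx
    exact hlt i (by omega)
  have hPcard : P.card = l + 1 := by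
    rw [hP, Finset.card_image_of_injOn, Finset.card_range]
    intro a ha b hb hab
    simp only [Finset.coe_range, Set.mem_Iio] at ha hb
    exact hinj a b (by omega) (by omega) hab
  set C := Finset.range (2 * l) \ P with hC
  have hCcard : C.card = l - 1 := by
    rw [hC, Finset.card_sdiff_of_subset hPsub, hPcard, Finset.card_range]
    omega
  obtain ⟨v, hv1, hv2⟩ := exists_enum_s7 C
  rw [hCcard] at hv1 hv2
  have hvC : ∀ i < l - 1, v i < 2 * l ∧ ∀ j ≤ l, p j ≠ v i := by
    intro i hi
    have h := (hv2 (v i)).mpr ⟨i, hi, rfl⟩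
    simp only [hC, hP, Finset.mem_sdiff, Finset.mem_range, Finset.mem_image] at h
    refine ⟨h.1, fun j hj hpj => h.2 ⟨j, by omega, hpj⟩⟩
  have hvinj : ∀ i j, i < l - 1 → j < l - 1 → v i = v j → i = j := by
    intro i j hi hj h
    rcases lt_trichotomy i j with h1 | h1 | h1
    · have := hv1 i j h1 hj; omega
    · exact h1
    · have := hv1 j i h1 hi; omega
  -- the key inequality: the valley after a peak is smaller than this peak
  have hvp : ∀ i < l - 1, v i < p (i + 1) := by
    intro i hi
    by_contra hc
    have hne := (hvC i hi).2 (i + 1) (by omega)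
    have hsub : Finset.range (p (i + 1)) ⊆
        (Finset.range (i + 1)).image p ∪ (Finset.range i).image v := by
      intro x hx
      simp only [Finset.mem_union, Finset.mem_image, Finset.mem_range] at hx ⊢
      have hx2 := hlt (i + 1) (by omega)
      by_cases hxP : x ∈ P
      · left
        simp only [hP, Finset.mem_image, Finset.mem_range] at hxP
        obtain ⟨j, hj, rfl⟩ := hxP
        refine ⟨j, ?_, rfl⟩
        by_contra hji
        rcases Nat.lt_or_ge (i + 1) j with h1 | h1
        · have := hmono (i + 1) j h1 (by omega); omega
        · obtain rfl : j = i + 1 := by omega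
          omega
      · right
        have hxC : x ∈ C := by
          simp only [hC, Finset.mem_sdiff, Finset.mem_range]
          exact ⟨by omega, hxP⟩
        obtain ⟨j, hj, rfl⟩ := (hv2 x).mp hxC
        refine ⟨j, ?_, rfl⟩
        by_contra hji
        rcases Nat.lt_or_ge i j with h1 | h1
        · have := hv1 i j h1 hj; omega
        · obtain rfl : j = i := by omega
          omega
    have h1 := Finset.card_le_card hsub
    have h2 := Finset.card_union_le ((Finset.range (i + 1)).image p) ((Finset.range i).image v)
    have h3 := Finset.card_image_le (s := Finset.range (i + 1)) (f := p)
    have h4 := Finset.card_image_le (s := Finset.range i) (f := v)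
    rw [Finset.card_range] at h1 h3 h4
    have h5 := hlow (i + 1) (by omega)
    omega
  let f : ℕ → ℕ := fun n =>
    if n = 0 then p 0 else if n % 2 = 1 then p (n / 2 + 1) else v (n / 2 - 1)
  have f0 : f 0 = p 0 := rfl
  have fodd : ∀ k, f (2 * k + 1) = p (k + 1) := by
    intro k
    have e1 : (2 * k + 1) % 2 = 1 := by omega
    have e2 : (2 * k + 1) / 2 = k := by omega
    simp [f, e1, e2]
  have feven : ∀ k, f (2 * k + 2) = v k := by
    intro k
    have e1 : (2 * k + 2) % 2 = 0 := by omega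
    have e2 : (2 * k + 2) / 2 - 1 = k := by omega
    simp [f]
  have cases3 : ∀ n < 2 * l, n = 0 ∨ (∃ k < l, n = 2 * k + 1) ∨ (∃ k < l - 1, n = 2 * k + 2) := by
    intro n hn
    rcases Nat.eq_zero_or_pos n with rfl | hn0
    · exact Or.inl rfl
    · rcases Nat.even_or_odd' n with ⟨k, rfl | rfl⟩
      · exact Or.inr (Or.inr ⟨k - 1, by omega, by omega⟩)
      · exact Or.inr (Or.inl ⟨k, by omega, rfl⟩)
  have flt : ∀ n < 2 * l, f n < 2 * l := by
    intro n hn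
    rcases cases3 n hn with rfl | ⟨k, hk, rfl⟩ | ⟨k, hk, rfl⟩
    · rw [f0]; exact hlt 0 (by omega)
    · rw [fodd]; exact hlt _ (by omega)
    · rw [feven]; exact (hvC k hk).1
  have finj : ∀ a b, a < 2 * l → b < 2 * l → f a = f b → a = b := by
    intro a b ha hb hab
    rcases cases3 a ha with rfl | ⟨i, hi, rfl⟩ | ⟨i, hi, rfl⟩ <;>
    rcases cases3 b hb with rfl | ⟨j, hj, rfl⟩ | ⟨j, hj, rfl⟩ <;>
    simp only [f0, fodd, feven] at hab
    · rfl
    · have := hinj _ _ (by omega) (by omega) hab; omega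
    · exact absurd hab ((hvC j hj).2 0 (by omega))
    · have := hinj _ _ (by omega) (by omega) hab; omega
    · have := hinj _ _ (by omega) (by omega) hab; omega
    · exact absurd hab ((hvC j hj).2 _ (by omega))
    · exact absurd hab.symm ((hvC i hi).2 _ (by omega))
    · exact absurd hab.symm ((hvC i hi).2 _ (by omega))
    · have := hvinj _ _ hi hj hab; omega
  let g : Fin (2 * l) → Fin (2 * l) := fun n => ⟨f n, flt n n.isLt⟩
  have ginj : Function.Injective g := by
    intro a b hab
    have := congrArg Fin.val hab
    exact Fin.ext (finj a b a.isLt b.isLt this)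
  let w : Equiv.Perm (Fin (2 * l)) := Equiv.ofBijective g (Finite.injective_iff_bijective.mp ginj)
  have wf : ∀ n < 2 * l, pval w n = f n := by
    intro n hn
    simp [pval, hn, w, g]
  refine ⟨w, ⟨?_, ?_, ?_⟩, ?_⟩
  · intro n hn
    rw [wf n (by omega), wf (n + 1) hn]
    rcases cases3 n (by omega) with rfl | ⟨k, hk, rfl⟩ | ⟨k, hk, rfl⟩
    · refine ⟨fun _ => ?_, fun h => by omega⟩
      have := fodd 0
      rw [f0]
      rw [show f (0 + 1) = p (0 + 1) from this]
      exact hmono 0 1 (by omega) (by omega)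
    · refine ⟨fun h => by omega, fun _ => ?_⟩
      rw [fodd, feven]
      exact hvp k (by omega)
    · refine ⟨fun _ => ?_, fun h => by omega⟩
      have := fodd (k + 1)
      rw [feven, show f (2 * k + 2 + 1) = p (k + 1 + 1) from this]
      exact (hvp k hk).trans (hmono _ _ (by omega) (by omega))
  · intro a b c hab hbc hc h1 h2
    rw [wf a (by omega), wf b (by omega)] at h2
    rw [wf b (by omega), wf c hc] at h1
    have hbv : ∃ j < l - 1, b = 2 * j + 2 := by
      rcases cases3 b (by omega) with rfl | ⟨j, hj, rfl⟩ | h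
      · omega
      · exfalso
        rw [fodd] at h2
        rcases cases3 a (by omega) with rfl | ⟨i, hi, rfl⟩ | ⟨i, hi, rfl⟩
        · rw [f0] at h2
          have := hmono 0 (j + 1) (by omega) (by omega); omega
        · rw [fodd] at h2
          have := hmono (i + 1) (j + 1) (by omega) (by omega); omega
        · rw [feven] at h2
          have := hvp i hi
          have := hmono (i + 1) (j + 1) (by omega) (by omega); omega
      · exact h
    obtain ⟨j, hj, rfl⟩ := hbv
    rw [feven] at h1 h2
    rcases cases3 c hc with rfl | ⟨i, hi, rfl⟩ | ⟨i, hi, rfl⟩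
    · omega
    · rw [fodd] at h1
      have := hvp j hj
      have := hmono (j + 1) (i + 1) (by omega) (by omega); omega
    · rw [feven] at h1
      have := hv1 j i (by omega) hi; omega
  · rw [wf _ (by omega)]
    have := fodd (l - 1)
    have e1 : 2 * (l - 1) + 1 = 2 * l - 1 := by omega
    have e2 : l - 1 + 1 = l := by omega
    rwa [e1, e2, htop] at this
  · intro i hi
    rw [wf _ (by omega)]
    rcases Nat.eq_zero_or_pos i with rfl | hi0
    · exact f0
    · have := fodd (i - 1)
      have e1 : 2 * (i - 1) + 1 = 2 * i - 1 := by omega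
      have e2 : i - 1 + 1 = i := by omega
      rwa [e1, e2] at this

/-- The staircase sequence of a permutation. -/
def toStair {l : ℕ} (w : Equiv.Perm (Fin (2 * l))) : Fin l → ℕ :=
  fun j => 2 * l - 2 - j - pval w (2 * (l - 1 - j) - 1)

theorem toStair_bounds {l : ℕ} {w : Equiv.Perm (Fin (2 * l))} (hw : Good l (pval w))
    (j : ℕ) (hj : j < l) : 2 * (l - 1 - j) ≤ pval w (2 * (l - 1 - j) - 1) ∧
      pval w (2 * (l - 1 - j) - 1) ≤ 2 * l - 2 - j := by
  have h1 := good_peak_lower hw (i := l - 1 - j) (by omega)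
  have h2 := good_peak_upper hw (j + 1) (l - 1 - j) (by omega)
  omega

theorem toStair_mem {l : ℕ} {w : Equiv.Perm (Fin (2 * l))} (hw : Good l (pval w)) :
    toStair w ∈ stair l l := by
  constructor
  · cases l with
    | zero => exact fun a => a.elim0
    | succ n =>
      rw [Fin.monotone_iff_le_succ]
      intro j
      have hj := j.isLt
      have h1 := toStair_bounds hw j (by omega)
      have h2 := toStair_bounds hw (j + 1) (by omega)
      have h3 := good_peak_succ hw (i := n + 1 - 1 - (j + 1)) (by omega)
      have e : n + 1 - 1 - ((j : ℕ) + 1) + 1 = n + 1 - 1 - j := by omega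
      rw [e] at h3
      simp only [toStair, Fin.val_castSucc, Fin.val_succ]
      omega
  · intro j
    have hj := j.isLt
    have h1 := toStair_bounds hw j hj
    simp only [toStair]
    omega

theorem toStair_surj {l : ℕ} (hl : 2 ≤ l) {d : Fin l → ℕ} (hd : d ∈ stair l l) :
    ∃ w : Equiv.Perm (Fin (2 * l)), Good l (pval w) ∧ toStair w = d := by
  obtain ⟨hm, hb⟩ := hd
  let p : ℕ → ℕ := fun i => if h : i < l then l - 1 + i - d ⟨l - 1 - i, by omega⟩ else 2 * l - 1
  have hp : ∀ i (h : i < l), p i = l - 1 + i - d ⟨l - 1 - i, by omega⟩ := by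
    intro i h
    simp [p, h]
  have hb' : ∀ i (h : i < l), d ⟨l - 1 - i, by omega⟩ ≤ l - 1 - i := fun i h => (hb _).1
  have htop : p l = 2 * l - 1 := by simp [p]
  obtain ⟨w, hw, hwp⟩ := good_exists hl p (by
    intro i j hij hj
    rcases Nat.lt_or_ge j l with h | h
    · have hi : i < l := by omega
      rw [hp i hi, hp j h]
      have h1 : d ⟨l - 1 - j, by omega⟩ ≤ d ⟨l - 1 - i, by omega⟩ := hm (by
        simp only [Fin.mk_le_mk]; omega)
      have h2 := hb' i hi
      omega
    · obtain rfl : j = l := by omega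
      rw [hp i hij, htop]
      omega) (by
    intro i hi
    rw [hp i hi]
    have h2 := hb' i hi
    omega) htop
  refine ⟨w, hw, ?_⟩
  funext j
  have hj := j.isLt
  have h1 := hwp (l - 1 - j) (by omega)
  have h2 := hp (l - 1 - j) (by omega)
  have e : (⟨l - 1 - (l - 1 - (j : ℕ)), by omega⟩ : Fin l) = j := Fin.ext (by simp; omega)
  rw [e] at h2
  have h3 := (hb j).1
  simp only [toStair, h1, h2]
  omega

theorem stmt7 (l : ℕ) (hl : 2 ≤ l) :
    Nat.card {w : Equiv.Perm (Fin (2 * l)) // UpDown w ∧ occ321 w = ∅ ∧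
        w ⟨2 * l - 1, by omega⟩ = ⟨2 * l - 1, by omega⟩} = catalan l := by
  rw [← stair_catalan l, ← Nat.card_coe_set_eq]
  refine Nat.card_eq_of_bijective
    (fun w => ⟨toStair w.1, toStair_mem ((good_iff_s7 l (by omega) w.1).mp w.2)⟩) ⟨?_, ?_⟩
  · intro w w' h
    have hw := (good_iff_s7 l (by omega) w.1).mp w.2
    have hw' := (good_iff_s7 l (by omega) w'.1).mp w'.2
    have he : toStair w.1 = toStair w'.1 := congrArg Subtype.val h
    refine Subtype.ext (good_unique hw hw' fun i hi => ?_)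
    have h1 := congrFun he ⟨l - 1 - i, by omega⟩
    have h2 := toStair_bounds hw (l - 1 - i) (by omega)
    have h3 := toStair_bounds hw' (l - 1 - i) (by omega)
    simp only [toStair] at h1
    have e : l - 1 - (l - 1 - i) = i := by omega
    rw [e] at h1 h2 h3
    omega
  · rintro ⟨d, hd⟩
    obtain ⟨w, hw, hwd⟩ := toStair_surj hl hd
    exact ⟨⟨w, (good_iff_s7 l (by omega) w).mpr hw⟩, Subtype.ext hwd⟩
end

section
/- For every ℓ ≥ 1, the number of 321-avoiding reverse-alternating (down-up) permutations of length 2ℓ+1 that end in their largest entry is the Catalan number C_ℓ, and the number that begin with their smallest entry is 0. -/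
theorem last_lt (l : ℕ) : 2 * l < 2 * l + 1 := Nat.lt_succ_self _

open DyckStep in
theorem cnt_take (L : List DyckStep) (s : DyckStep) (k : ℕ) :
    (L.take k).count s = Nat.count (fun v => L[v]? = some s) k := by
  induction k with
  | zero => simp
  | succ k ih =>
    rw [Nat.count_succ, ← ih, List.take_add_one, List.count_append]
    rcases h : L[k]? with _ | t
    · simp
    · simp [List.count_singleton]

/-- The word attached to a permutation: entry `v` is `U` iff `v` sits at an odd position. -/
def pword (l : ℕ) (w : Equiv.Perm (Fin (2 * l + 1))) : List DyckStep :=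
  List.ofFn (n := 2 * l) fun v =>
    if (w.symm v.castSucc).val % 2 = 1 then DyckStep.U else DyckStep.D

theorem pword_U (l : ℕ) (w : Equiv.Perm (Fin (2 * l + 1)))
    (hw : w ⟨2 * l, last_lt l⟩ = ⟨2 * l, last_lt l⟩) (v : ℕ) :
    (pword l w)[v]? = some DyckStep.U ↔
      ∃ i, ∃ h : 2 * i + 1 < 2 * l + 1, (w ⟨2 * i + 1, h⟩).val = v := by
  unfold pword
  rw [List.getElem?_ofFn]
  constructor
  · intro h
    by_cases h1 : v < 2 * l
    swap
    · rw [dif_neg h1] at h; simp at h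
    rw [dif_pos h1] at h
    simp only [Option.some.injEq, ite_eq_left_iff, reduceCtorEq, imp_false, not_not] at h
    have hj := (w.symm (Fin.castSucc ⟨v, h1⟩)).isLt
    refine ⟨(w.symm (Fin.castSucc ⟨v, h1⟩)).val / 2, by omega, ?_⟩
    have : (⟨2 * ((w.symm (Fin.castSucc ⟨v, h1⟩)).val / 2) + 1, by omega⟩ : Fin (2 * l + 1)) =
        w.symm (Fin.castSucc ⟨v, h1⟩) := by ext; simp only; omega
    rw [this]; simp
  · rintro ⟨i, h, rfl⟩
    have hne : w ⟨2 * i + 1, h⟩ ≠ ⟨2 * l, last_lt l⟩ := by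
      rw [← hw]; intro h2; have := w.injective h2; simp at this; omega
    have hlt : (w ⟨2 * i + 1, h⟩).val < 2 * l := by
      have := (w ⟨2 * i + 1, h⟩).isLt
      have : (w ⟨2 * i + 1, h⟩).val ≠ 2 * l := fun h3 => hne (Fin.ext h3)
      omega
    rw [dif_pos hlt]
    simp [Nat.add_mod]

theorem pword_D (l : ℕ) (w : Equiv.Perm (Fin (2 * l + 1)))
    (hw : w ⟨2 * l, last_lt l⟩ = ⟨2 * l, last_lt l⟩) (v : ℕ) :
    (pword l w)[v]? = some DyckStep.D ↔
      ∃ i, ∃ h : 2 * i + 1 < 2 * l + 1, (w ⟨2 * i, by omega⟩).val = v := by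
  unfold pword
  rw [List.getElem?_ofFn]
  constructor
  · intro h
    by_cases h1 : v < 2 * l
    swap
    · rw [dif_neg h1] at h; simp at h
    rw [dif_pos h1] at h
    simp only [Option.some.injEq, ite_eq_right_iff, reduceCtorEq, imp_false] at h
    have hj := (w.symm (Fin.castSucc ⟨v, h1⟩)).isLt
    have hne : w.symm (Fin.castSucc ⟨v, h1⟩) ≠ ⟨2 * l, last_lt l⟩ := by
      intro h2
      rw [Equiv.symm_apply_eq, hw] at h2
      simp [Fin.ext_iff] at h2; omega
    have hne' : (w.symm (Fin.castSucc ⟨v, h1⟩)).val ≠ 2 * l := fun h3 => hne (Fin.ext h3)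
    refine ⟨(w.symm (Fin.castSucc ⟨v, h1⟩)).val / 2, by omega, ?_⟩
    have : (⟨2 * ((w.symm (Fin.castSucc ⟨v, h1⟩)).val / 2), by omega⟩ : Fin (2 * l + 1)) =
        w.symm (Fin.castSucc ⟨v, h1⟩) := by ext; simp only; omega
    rw [this]; simp
  · rintro ⟨i, h, rfl⟩
    have hne : w ⟨2 * i, by omega⟩ ≠ ⟨2 * l, last_lt l⟩ := by
      rw [← hw]; intro h2; have := w.injective h2; simp at this; omega
    have hlt : (w ⟨2 * i, by omega⟩).val < 2 * l := by
      have := (w ⟨2 * i, by omega⟩).isLt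
      have : (w ⟨2 * i, by omega⟩).val ≠ 2 * l := fun h3 => hne (Fin.ext h3)
      omega
    rw [dif_pos hlt]
    simp

theorem downUp_even {n : ℕ} {w : Equiv.Perm (Fin n)} (hd : DownUp w) (i : ℕ)
    (h : 2 * i + 1 < n) : w ⟨2 * i + 1, h⟩ < w ⟨2 * i, by omega⟩ := by
  have := hd (2 * i) h
  rwa [if_pos (by omega)] at this

theorem pword_prefix (l : ℕ) (w : Equiv.Perm (Fin (2 * l + 1)))
    (hw : w ⟨2 * l, last_lt l⟩ = ⟨2 * l, last_lt l⟩) (hd : DownUp w) (k : ℕ) :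
    ((pword l w).take k).count DyckStep.D ≤ ((pword l w).take k).count DyckStep.U := by
  rw [cnt_take, cnt_take, Nat.count_eq_card_filter_range, Nat.count_eq_card_filter_range]
  apply Finset.card_le_card_of_forall_subsingleton
    (fun v u => ∃ i, ∃ h : 2 * i + 1 < 2 * l + 1,
      (w ⟨2 * i, by omega⟩).val = v ∧ (w ⟨2 * i + 1, h⟩).val = u)
  · intro v hv
    simp only [Finset.mem_filter, Finset.mem_range, pword_D l w hw] at hv
    obtain ⟨hk, i, h, rfl⟩ := hv
    have h1 := downUp_even hd i h
    refine ⟨(w ⟨2 * i + 1, h⟩).val, ?_, i, h, rfl, rfl⟩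
    simp only [Finset.mem_filter, Finset.mem_range, pword_U l w hw]
    exact ⟨lt_trans h1 hk, i, h, rfl⟩
  · rintro u hu v ⟨_, i, h, rfl, h1⟩ v' ⟨_, i', h', rfl, h1'⟩
    have := w.injective (Fin.ext (h1.trans h1'.symm))
    simp only [Fin.mk.injEq] at this
    have : i = i' := by omega
    subst this; rfl

theorem pword_length (l : ℕ) (w : Equiv.Perm (Fin (2 * l + 1))) :
    (pword l w).length = 2 * l := by simp [pword]

theorem pword_total (l : ℕ) (w : Equiv.Perm (Fin (2 * l + 1)))
    (hw : w ⟨2 * l, last_lt l⟩ = ⟨2 * l, last_lt l⟩) (hd : DownUp w) :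
    (pword l w).count DyckStep.U = (pword l w).count DyckStep.D := by
  apply le_antisymm
  · have e : (pword l w) = (pword l w).take (2 * l) := by
      rw [List.take_of_length_le]; rw [pword_length]
    rw [e]
    rw [cnt_take, cnt_take, Nat.count_eq_card_filter_range, Nat.count_eq_card_filter_range]
    apply Finset.card_le_card_of_forall_subsingleton
      (fun u v => ∃ i, ∃ h : 2 * i + 1 < 2 * l + 1,
        (w ⟨2 * i, by omega⟩).val = v ∧ (w ⟨2 * i + 1, h⟩).val = u)
    · intro v hv
      simp only [Finset.mem_filter, Finset.mem_range, pword_U l w hw] at hv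
      obtain ⟨hk, i, h, rfl⟩ := hv
      have h1 : (pword l w)[(w ⟨2 * i, by omega⟩).val]? = some DyckStep.D := by
        rw [pword_D l w hw]; exact ⟨i, h, rfl⟩
      refine ⟨(w ⟨2 * i, by omega⟩).val, ?_, i, h, rfl, rfl⟩
      simp only [Finset.mem_filter, Finset.mem_range]
      obtain ⟨h2, _⟩ := List.getElem?_eq_some_iff.1 h1
      rw [pword_length] at h2
      exact ⟨h2, h1⟩
    · rintro u hu v ⟨_, i, h, h1, rfl⟩ v' ⟨_, i', h', h1', rfl⟩
      have := w.injective (Fin.ext (h1.trans h1'.symm))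
      simp only [Fin.mk.injEq] at this
      have : i = i' := by omega
      subst this; rfl
  · have := pword_prefix l w hw hd (2 * l)
    rwa [List.take_of_length_le (by rw [pword_length])] at this

theorem peaks_mono (l : ℕ) (w : Equiv.Perm (Fin (2 * l + 1))) (hd : DownUp w)
    (ho : occ321 w = ∅) (hw : w ⟨2 * l, last_lt l⟩ = ⟨2 * l, last_lt l⟩) :
    StrictMono (fun i : Fin (l + 1) => w ⟨2 * i.val, by omega⟩) := by
  intro i j hij
  have hij' : i.val < j.val := hij
  by_contra hc
  simp only [not_lt] at hc
  have hne : w ⟨2 * j.val, by omega⟩ ≠ w ⟨2 * i.val, by omega⟩ := by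
    intro h; have := w.injective h; simp only [Fin.mk.injEq] at this; omega
  have hlt := lt_of_le_of_ne hc hne
  by_cases hj : j.val = l
  · simp only [hj, hw] at hlt
    have := (w ⟨2 * i.val, by omega⟩).isLt
    have h3 : 2 * l < (w ⟨2 * i.val, by omega⟩).val := hlt
    omega
  · have h1 := downUp_even hd j.val (by omega)
    have : ((⟨2 * i.val, by omega⟩, ⟨2 * j.val, by omega⟩, ⟨2 * j.val + 1, by omega⟩) :
      Fin (2 * l + 1) × Fin (2 * l + 1) × Fin (2 * l + 1)) ∈ occ321 w := by
      refine ⟨?_, ?_, h1, hlt⟩ <;> simp only [Fin.mk_lt_mk] <;> omega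
    rw [ho] at this
    exact this

theorem valleys_mono (l : ℕ) (w : Equiv.Perm (Fin (2 * l + 1))) (hd : DownUp w)
    (ho : occ321 w = ∅) :
    StrictMono (fun i : Fin l => w ⟨2 * i.val + 1, by omega⟩) := by
  intro i j hij
  have hij' : i.val < j.val := hij
  by_contra hc
  simp only [not_lt] at hc
  have hne : w ⟨2 * j.val + 1, by omega⟩ ≠ w ⟨2 * i.val + 1, by omega⟩ := by
    intro h; have := w.injective h; simp only [Fin.mk.injEq] at this; omega
  have hlt := lt_of_le_of_ne hc hne
  have h1 := downUp_even hd i.val (by omega)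
  have : ((⟨2 * i.val, by omega⟩, ⟨2 * i.val + 1, by omega⟩, ⟨2 * j.val + 1, by omega⟩) :
      Fin (2 * l + 1) × Fin (2 * l + 1) × Fin (2 * l + 1)) ∈ occ321 w := by
    refine ⟨?_, ?_, hlt, h1⟩ <;> simp only [Fin.mk_lt_mk] <;> omega
  rw [ho] at this
  exact this

theorem valley_range_sub (l : ℕ) (w w' : Equiv.Perm (Fin (2 * l + 1)))
    (hw : w ⟨2 * l, last_lt l⟩ = ⟨2 * l, last_lt l⟩)
    (hw' : w' ⟨2 * l, last_lt l⟩ = ⟨2 * l, last_lt l⟩) (h : pword l w = pword l w') :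
    Set.range (fun i : Fin l => w ⟨2 * i.val + 1, by omega⟩) ⊆
    Set.range (fun i : Fin l => w' ⟨2 * i.val + 1, by omega⟩) := by
  rintro _ ⟨i, rfl⟩
  have h1 := (pword_U l w hw (w ⟨2 * i.val + 1, by omega⟩).val).2 ⟨i.val, by omega, rfl⟩
  rw [h, pword_U l w' hw'] at h1
  obtain ⟨j, hj, e⟩ := h1
  exact ⟨⟨j, by omega⟩, Fin.ext e⟩

theorem peak_range_sub (l : ℕ) (w w' : Equiv.Perm (Fin (2 * l + 1)))
    (hw : w ⟨2 * l, last_lt l⟩ = ⟨2 * l, last_lt l⟩)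
    (hw' : w' ⟨2 * l, last_lt l⟩ = ⟨2 * l, last_lt l⟩) (h : pword l w = pword l w') :
    Set.range (fun i : Fin (l + 1) => w ⟨2 * i.val, by omega⟩) ⊆
    Set.range (fun i : Fin (l + 1) => w' ⟨2 * i.val, by omega⟩) := by
  rintro _ ⟨i, rfl⟩
  by_cases hi : i.val = l
  · refine ⟨⟨l, by omega⟩, ?_⟩
    simp only [hi, hw, hw']
  have h1 := (pword_D l w hw (w ⟨2 * i.val, by omega⟩).val).2 ⟨i.val, by omega, rfl⟩
  rw [h, pword_D l w' hw'] at h1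
  obtain ⟨j, hj, e⟩ := h1
  exact ⟨⟨j, by omega⟩, Fin.ext e⟩

theorem pword_inj (l : ℕ) (w w' : Equiv.Perm (Fin (2 * l + 1)))
    (hd : DownUp w) (ho : occ321 w = ∅)
    (hw : w ⟨2 * l, last_lt l⟩ = ⟨2 * l, last_lt l⟩)
    (hd' : DownUp w') (ho' : occ321 w' = ∅)
    (hw' : w' ⟨2 * l, last_lt l⟩ = ⟨2 * l, last_lt l⟩) (h : pword l w = pword l w') : w = w' := by
  have e1 := (StrictMono.range_inj (peaks_mono l w hd ho hw) (peaks_mono l w' hd' ho' hw')).1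
    (Set.Subset.antisymm (peak_range_sub l w w' hw hw' h) (peak_range_sub l w' w hw' hw h.symm))
  have e2 := (StrictMono.range_inj (valleys_mono l w hd ho) (valleys_mono l w' hd' ho')).1
    (Set.Subset.antisymm (valley_range_sub l w w' hw hw' h)
      (valley_range_sub l w' w hw' hw h.symm))
  ext1 j
  rcases Nat.even_or_odd' j.val with ⟨c, hc | hc⟩
  · have := congrFun e1 ⟨c, by omega⟩
    have ej : j = ⟨2 * c, by omega⟩ := Fin.ext hc
    rw [ej]; exact this
  · have := congrFun e2 ⟨c, by omega⟩
    have ej : j = ⟨2 * c + 1, by omega⟩ := Fin.ext hc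
    rw [ej]; exact this

/-- Given the valleys `a` and the peaks `b`, build the permutation. -/
theorem build (l : ℕ) (a b : ℕ → ℕ) (ha : StrictMono a) (hb : StrictMono b)
    (hab : ∀ i < l, a i < b i) (hbl : b l = 2 * l) (hne : ∀ i < l, ∀ j ≤ l, a i ≠ b j) :
    ∃ w : Equiv.Perm (Fin (2 * l + 1)), DownUp w ∧ occ321 w = ∅ ∧
      w ⟨2 * l, last_lt l⟩ = ⟨2 * l, last_lt l⟩ ∧
      (∀ i, ∀ h : 2 * i + 1 < 2 * l + 1, (w ⟨2 * i + 1, h⟩).val = a i) ∧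
      (∀ i, ∀ h : 2 * i < 2 * l + 1, (w ⟨2 * i, h⟩).val = b i) := by
  have hbb : ∀ i ≤ l, b i ≤ 2 * l := fun i hi => hbl ▸ hb.monotone hi
  let f : Fin (2 * l + 1) → Fin (2 * l + 1) := fun j =>
    ⟨if j.val % 2 = 1 then a (j.val / 2) else b (j.val / 2), by
      have := j.isLt
      split_ifs with h
      · have h1 := hab (j.val / 2) (by omega)
        have h2 := hbb (j.val / 2) (by omega)
        omega
      · have h2 := hbb (j.val / 2) (by omega)
        omega⟩
  have fval : ∀ j, (f j).val = if j.val % 2 = 1 then a (j.val / 2) else b (j.val / 2) :=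
    fun j => rfl
  have finj : Function.Injective f := by
    intro i j hij
    have h := congrArg Fin.val hij
    rw [fval, fval] at h
    have h1 := i.isLt
    have h2 := j.isLt
    ext
    split_ifs at h with h3 h4 h4
    · have := ha.injective h; omega
    · exact absurd h (hne _ (by omega) _ (by omega))
    · exact absurd h.symm (hne _ (by omega) _ (by omega))
    · have := hb.injective h; omega
  have fmono : ∀ i j : Fin (2 * l + 1), i < j → i.val % 2 = j.val % 2 → f i < f j := by
    intro i j hij hp
    have hij' : i.val < j.val := hij
    rw [Fin.lt_def, fval, fval, hp]
    split_ifs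
    · exact ha (by omega)
    · exact hb (by omega)
  refine ⟨Equiv.ofBijective f (Finite.injective_iff_bijective.1 finj), ?_, ?_, ?_, ?_, ?_⟩
  · intro i h
    simp only [Equiv.ofBijective_apply, Fin.lt_def, fval]
    by_cases h1 : i % 2 = 0
    · rw [if_pos h1, if_pos (by omega), if_neg (by omega)]
      have e : (i + 1) / 2 = i / 2 := by omega
      rw [e]; exact hab _ (by omega)
    · rw [if_neg h1, if_pos (by omega), if_neg (by omega)]
      have h4 := hab (i / 2) (by omega)
      exact h4.trans (hb (by omega))
  · ext ⟨x, y, z⟩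
    simp only [occ321, Equiv.ofBijective_apply, Set.mem_ofPred_eq, Set.mem_empty_iff_false,
      iff_false]
    rintro ⟨h1, h2, h3, h4⟩
    by_cases hxy : x.val % 2 = y.val % 2
    · exact lt_asymm h4 (fmono x y h1 hxy)
    by_cases hyz : y.val % 2 = z.val % 2
    · exact lt_asymm h3 (fmono y z h2 hyz)
    · exact lt_asymm (h3.trans h4) (fmono x z (h1.trans h2) (by omega))
  · simp only [Equiv.ofBijective_apply]
    ext
    rw [fval]
    simp [hbl]
  · intro i h
    simp only [Equiv.ofBijective_apply, fval]
    rw [if_pos (by omega)]; congr 1; omega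
  · intro i h
    simp only [Equiv.ofBijective_apply, fval]
    rw [if_neg (by omega)]; congr 1; omega

theorem pword_surj (l : ℕ) (p : DyckWord) (hp : p.semilength = l) :
    ∃ w : Equiv.Perm (Fin (2 * l + 1)), DownUp w ∧ occ321 w = ∅ ∧
      w ⟨2 * l, last_lt l⟩ = ⟨2 * l, last_lt l⟩ ∧ pword l w = p.toList := by
  classical
  have hlen : p.toList.length = 2 * l := by rw [← p.two_mul_semilength_eq_length, hp]
  let P : ℕ → Prop := fun v => p.toList[v]? = some DyckStep.U ∨ 2 * l + 1 ≤ v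
  let Q : ℕ → Prop := fun v => p.toList[v]? = some DyckStep.D ∨ 2 * l ≤ v
  have PQ : ∀ v < 2 * l + 1, P v → ¬ Q v := by
    rintro v hv (h1 | h1) (h2 | h2)
    · rw [h1] at h2; simp at h2
    · rw [List.getElem?_eq_none (by omega)] at h1; simp at h1
    · omega
    · omega
  have hPinf : (Set.ofPred P).Infinite := by
    apply Set.Infinite.mono (s := Set.Ici (2 * l + 1)) _ (Set.Ici_infinite _)
    intro v hv; exact Or.inr hv
  have hQinf : (Set.ofPred Q).Infinite := by
    apply Set.Infinite.mono (s := Set.Ici (2 * l)) _ (Set.Ici_infinite _)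
    intro v hv; exact Or.inr hv
  have cP : ∀ k ≤ 2 * l, Nat.count P k = (p.toList.take k).count DyckStep.U := by
    intro k hk
    rw [cnt_take, Nat.count_eq_card_filter_range, Nat.count_eq_card_filter_range]
    congr 1
    apply Finset.filter_congr
    intro v hv
    rw [Finset.mem_range] at hv
    simp only [P]
    constructor
    · rintro (h | h)
      · exact h
      · omega
    · exact Or.inl
  have cQ : ∀ k ≤ 2 * l, Nat.count Q k = (p.toList.take k).count DyckStep.D := by
    intro k hk
    rw [cnt_take, Nat.count_eq_card_filter_range, Nat.count_eq_card_filter_range]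
    congr 1
    apply Finset.filter_congr
    intro v hv
    rw [Finset.mem_range] at hv
    simp only [Q]
    constructor
    · rintro (h | h)
      · exact h
      · omega
    · exact Or.inl
  have cPl : Nat.count P (2 * l) = l := by
    rw [cP _ le_rfl, List.take_of_length_le hlen.le]; exact hp
  have cQl : Nat.count Q (2 * l) = l := by
    rw [cQ _ le_rfl, List.take_of_length_le hlen.le, ← p.semilength_eq_count_D]; exact hp
  have hbl : Nat.nth Q l = 2 * l := by
    have h := Nat.nth_count (p := Q) (n := 2 * l) (Or.inr le_rfl)
    rwa [cQl] at h
  have hPlt : ∀ i < l, Nat.nth P i < 2 * l := fun i hi =>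
    Nat.nth_lt_of_lt_count (by rw [cPl]; exact hi)
  have hab : ∀ i < l, Nat.nth P i < Nat.nth Q i := by
    intro i hi
    apply Nat.nth_lt_of_lt_count
    have h1 : Nat.nth Q i < 2 * l := by rw [← hbl]; exact Nat.nth_strictMono hQinf hi
    have h2 : Q (Nat.nth Q i) := Nat.nth_mem_of_infinite hQinf i
    have h3 : ¬ P (Nat.nth Q i) := fun h => PQ _ (by omega) h h2
    have h4 := p.count_D_le_count_U (Nat.nth Q i + 1)
    rw [← cP _ (by omega), ← cQ _ (by omega), Nat.count_succ, Nat.count_succ, if_pos h2,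
      if_neg h3, Nat.count_nth_of_infinite hQinf] at h4
    omega
  obtain ⟨w, hd, ho, hw, hU, hD⟩ := build l (Nat.nth P) (Nat.nth Q) (Nat.nth_strictMono hPinf)
    (Nat.nth_strictMono hQinf) hab hbl (by
      intro i hi j hj h
      have h1 : P (Nat.nth P i) := Nat.nth_mem_of_infinite hPinf i
      have h2 : Q (Nat.nth Q j) := Nat.nth_mem_of_infinite hQinf j
      rw [← h] at h2
      have := hPlt i hi
      exact PQ _ (by omega) h1 h2)
  refine ⟨w, hd, ho, hw, ?_⟩
  apply List.ext_getElem?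
  intro v
  by_cases hv : v < 2 * l
  · rcases h : p.toList[v]? with _ | s
    · rw [List.getElem?_eq_none_iff] at h; omega
    · cases s with
      | U =>
        rw [pword_U l w hw]
        have h1 : P v := Or.inl h
        have h2 : Nat.count P v < l := by
          exact (Nat.count_strict_mono h1 hv).trans_eq cPl
        refine ⟨Nat.count P v, by omega, ?_⟩
        rw [hU, Nat.nth_count h1]
      | D =>
        rw [pword_D l w hw]
        have h1 : Q v := Or.inl h
        have h2 : Nat.count Q v < l := by
          exact (Nat.count_strict_mono h1 hv).trans_eq cQl
        refine ⟨Nat.count Q v, by omega, ?_⟩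
        rw [hD, Nat.nth_count h1]
  · rw [List.getElem?_eq_none (by rw [pword_length]; omega), List.getElem?_eq_none (by omega)]

theorem stmt12 (l : ℕ) (hl : 1 ≤ l) :
    Nat.card {w : Equiv.Perm (Fin (2 * l + 1)) // DownUp w ∧ occ321 w = ∅ ∧
        w ⟨2 * l, by omega⟩ = ⟨2 * l, by omega⟩} = catalan l ∧
    Nat.card {w : Equiv.Perm (Fin (2 * l + 1)) // DownUp w ∧ occ321 w = ∅ ∧
        w ⟨0, by omega⟩ = ⟨0, by omega⟩} = 0 := by
  constructor
  · rw [← DyckWord.card_dyckWord_semilength_eq_catalan, ← Nat.card_eq_fintype_card]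
    let F : {w : Equiv.Perm (Fin (2 * l + 1)) // DownUp w ∧ occ321 w = ∅ ∧
        w ⟨2 * l, by omega⟩ = ⟨2 * l, by omega⟩} → { p : DyckWord // p.semilength = l } :=
      fun w => ⟨⟨pword l w.1, pword_total l w.1 w.2.2.2 w.2.1,
        pword_prefix l w.1 w.2.2.2 w.2.1⟩, by
          have h := DyckWord.two_mul_semilength_eq_length (p := ⟨pword l w.1,
            pword_total l w.1 w.2.2.2 w.2.1, pword_prefix l w.1 w.2.2.2 w.2.1⟩)
          simp only [pword_length] at h
          omega⟩
    apply Nat.card_eq_of_bijective F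
    constructor
    · rintro ⟨w, hd, ho, hw⟩ ⟨w', hd', ho', hw'⟩ h
      have h1 : pword l w = pword l w' := congrArg (fun q => q.1.toList) h
      exact Subtype.ext (pword_inj l w w' hd ho hw hd' ho' hw' h1)
    · rintro ⟨p, hp⟩
      obtain ⟨w, hd, ho, hw, h⟩ := pword_surj l p hp
      exact ⟨⟨w, hd, ho, hw⟩, Subtype.ext (DyckWord.ext h)⟩
  · rw [Nat.card_eq_zero]
    left
    constructor
    rintro ⟨w, hd, _, h0⟩
    have h := downUp_even hd 0 (by omega)
    have h' : w ⟨2 * 0 + 1, by omega⟩ < w ⟨0, by omega⟩ := h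
    rw [h0] at h'
    exact absurd h' (by simp)
end
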